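/- For every architecture A, finite alphabet Σ, and k ≥ 1, there exists a nondeterministic bottom-up tree automaton A_cbm^{k-stw} that accepts a binary tree τ over Λ^k if and only if τ is a valid k-STT, the coloring χ_τ has empty domain, and G_τ is a CBM over (A,Σ); moreover its number of states can be bounded by 2^{c·k²·(|Procs|+|DS|)} for a constant c independent of A, Σ, and k. -/

import Mathlib

/-! ### Architectures and concurrent behaviors with matching (CBMs) -/

/-- The three kinds of data structures. -/
inductive DSKind : Type
  | stack
  | queue
  | bag
deriving DecidableEq

/-- An architecture: a finite set of processes, a finite set of data structures
(each a stack, queue, or bag), with writer and reader processes; stacks are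
written and read by the same process. -/
structure Architecture where
  Procs : Type
  DS : Type
  procsFintype : Fintype Procs
  dsFintype : Fintype DS
  procsDecEq : DecidableEq Procs
  dsDecEq : DecidableEq DS
  kind : DS → DSKind
  Writer : DS → Procs
  Reader : DS → Procs
  stack_wr : ∀ d, kind d = DSKind.stack → Writer d = Reader d

attribute [instance] Architecture.procsFintype Architecture.dsFintype
  Architecture.procsDecEq Architecture.dsDecEq

/-- Potential events: a process together with a (1-based) position. -/
abbrev Architecture.Event (A : Architecture) : Type := A.Procs × ℕ

/-- The data of a CBM: one word per process and one matching relation per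
data structure (on potential events). -/
structure PreCBM (A : Architecture) (Alph : Type) where
  word : A.Procs → List Alph
  mrel : A.DS → A.Event → A.Event → Prop

namespace PreCBM

variable {A : Architecture} {Alph : Type}

/-- `(p,i)` is an event iff `1 ≤ i ≤ |w_p|`. -/
def isEvent (M : PreCBM A Alph) (e : A.Event) : Prop :=
  1 ≤ e.2 ∧ e.2 ≤ (M.word e.1).length

/-- The set of events of `M`. -/
def events (M : PreCBM A Alph) : Set A.Event := {e | M.isEvent e}

/-- The label of event `(p,i)` is the `i`-th letter of `w_p`. -/
def label (M : PreCBM A Alph) (e : A.Event) : Option Alph :=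
  (M.word e.1)[e.2 - 1]?

/-- Process-successor relation `(p,i) → (p,i+1)`. -/
def procSucc (M : PreCBM A Alph) (e f : A.Event) : Prop :=
  M.isEvent e ∧ M.isEvent f ∧ f.1 = e.1 ∧ f.2 = e.2 + 1

/-- `e ▷ f` for some data structure. -/
def mat (M : PreCBM A Alph) (e f : A.Event) : Prop := ∃ d, M.mrel d e f

def step (M : PreCBM A Alph) (e f : A.Event) : Prop := M.procSucc e f ∨ M.mat e f

/-- The causal order `< = (→ ∪ ▷)⁺`. -/
def lt (M : PreCBM A Alph) : A.Event → A.Event → Prop := Relation.TransGen M.step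

/-- An event is internal if it is not the endpoint of any matching edge. -/
def isInternal (M : PreCBM A Alph) (e : A.Event) : Prop :=
  ¬ ∃ d f, M.mrel d e f ∨ M.mrel d f e

/-- The CBM axioms. -/
structure IsCBM (M : PreCBM A Alph) : Prop where
  mrel_valid : ∀ d e f, M.mrel d e f →
    M.isEvent e ∧ M.isEvent f ∧ e.1 = A.Writer d ∧ f.1 = A.Reader d
  disjoint : ∀ d d' e f e' f', M.mrel d e f → M.mrel d' e' f' →
    ¬ (d = d' ∧ e = e' ∧ f = f') → e ≠ e' ∧ e ≠ f' ∧ f ≠ e' ∧ f ≠ f'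
  irrefl : ∀ e, ¬ M.lt e e
  lifo : ∀ d, A.kind d = DSKind.stack → ∀ e₁ f₁ e₂ f₂,
    M.mrel d e₁ f₁ → M.mrel d e₂ f₂ → M.lt e₁ e₂ → M.lt e₂ f₁ → M.lt f₂ f₁
  fifo : ∀ d, A.kind d = DSKind.queue → ∀ e₁ f₁ e₂ f₂,
    M.mrel d e₁ f₁ → M.mrel d e₂ f₂ → M.lt e₁ e₂ → M.lt f₁ f₂

end PreCBM

/-- Concurrent behaviors with matching over `(A, Alph)`. -/
def CBM (A : Architecture) (Alph : Type) : Type := {M : PreCBM A Alph // M.IsCBM}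
/-! ### Monadic second-order logic over vertex- and edge-labeled structures -/

/-- MSO formulas over structures with vertex labels `Vl` and binary relations
indexed by `El`.  First-order variables and set variables are indexed by `ℕ`. -/
inductive GMSO (Vl El : Type) : Type
  | lab (a : Vl) (x : ℕ)
  | edge (γ : El) (x y : ℕ)
  | eq (x y : ℕ)
  | mem (x X : ℕ)
  | or (φ ψ : GMSO Vl El)
  | not (φ : GMSO Vl El)
  | exFO (x : ℕ) (φ : GMSO Vl El)
  | exSO (X : ℕ) (φ : GMSO Vl El)

namespace GMSO

variable {Vl El : Type} {V : Type}

/-- Satisfaction of an MSO formula in a structure with domain `dom`, labeling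
relation `lab` and edge relations `edge`, under valuations `ν` (first-order,
partial) and `μ` (second-order). -/
def Sat (dom : Set V) (lab : V → Vl → Prop) (edge : El → V → V → Prop) :
    (ℕ → Option V) → (ℕ → Set V) → GMSO Vl El → Prop
  | ν, _, .lab a x => ∃ v, ν x = some v ∧ v ∈ dom ∧ lab v a
  | ν, _, .edge γ x y => ∃ u v, ν x = some u ∧ ν y = some v ∧ edge γ u v
  | ν, _, .eq x y => ∃ v, ν x = some v ∧ ν y = some v
  | ν, μ, .mem x X => ∃ v, ν x = some v ∧ v ∈ μ X
  | ν, μ, .or φ ψ => Sat dom lab edge ν μ φ ∨ Sat dom lab edge ν μ ψ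
  | ν, μ, .not φ => ¬ Sat dom lab edge ν μ φ
  | ν, μ, .exFO x φ => ∃ v ∈ dom, Sat dom lab edge (Function.update ν x (some v)) μ φ
  | ν, μ, .exSO X φ => ∃ E : Set V, E ⊆ dom ∧ Sat dom lab edge ν (Function.update μ X E) φ

/-- Free first-order variables. -/
def freeFO : GMSO Vl El → Set ℕ
  | .lab _ x => {x}
  | .edge _ x y => {x, y}
  | .eq x y => {x, y}
  | .mem x _ => {x}
  | .or φ ψ => freeFO φ ∪ freeFO ψ
  | .not φ => freeFO φ
  | .exFO x φ => freeFO φ \ {x}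
  | .exSO _ φ => freeFO φ

/-- Free second-order variables. -/
def freeSO : GMSO Vl El → Set ℕ
  | .lab _ _ => ∅
  | .edge _ _ _ => ∅
  | .eq _ _ => ∅
  | .mem _ X => {X}
  | .or φ ψ => freeSO φ ∪ freeSO ψ
  | .not φ => freeSO φ
  | .exFO _ φ => freeSO φ
  | .exSO X φ => freeSO φ \ {X}

/-- A sentence is a formula without free variables. -/
def Closed (φ : GMSO Vl El) : Prop := freeFO φ = ∅ ∧ freeSO φ = ∅

/-- Satisfaction of a sentence (valuations are irrelevant for sentences). -/
def Models (dom : Set V) (lab : V → Vl → Prop) (edge : El → V → V → Prop)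
    (φ : GMSO Vl El) : Prop :=
  Sat dom lab edge (fun _ => none) (fun _ => ∅) φ

/-- First-order formulas: no second-order quantification. -/
def FirstOrder : GMSO Vl El → Prop
  | .or φ ψ => FirstOrder φ ∧ FirstOrder ψ
  | .not φ => FirstOrder φ
  | .exFO _ φ => FirstOrder φ
  | .exSO _ _ => False
  | _ => True

/-- EMSO formulas: a block of existential second-order quantifiers followed by a
first-order formula. -/
inductive IsEMSO : GMSO Vl El → Prop
  | fo {φ : GMSO Vl El} : FirstOrder φ → IsEMSO φ
  | ex {X : ℕ} {φ : GMSO Vl El} : IsEMSO φ → IsEMSO (.exSO X φ)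

end GMSO
/-! ### Labeled binary trees (with unary nodes) and MSO over them -/

/-- Λ-labeled trees in which every node has 0, 1, or 2 children. -/
inductive BTree (Λ : Type) : Type
  | leaf (l : Λ)
  | unary (l : Λ) (t : BTree Λ)
  | binary (l : Λ) (t₁ t₂ : BTree Λ)

namespace BTree

variable {Λ : Type}

/-- The label at a position (a path from the root; `false` = child 0,
`true` = child 1), if the position exists. -/
def labelAt : BTree Λ → List Bool → Option Λ
  | .leaf l, [] => some l
  | .unary l _, [] => some l
  | .binary l _ _, [] => some l
  | .unary _ t, false :: p => t.labelAt p
  | .binary _ t₁ _, false :: p => t₁.labelAt p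
  | .binary _ _ t₂, true :: p => t₂.labelAt p
  | _, _ => none

/-- The set of node positions of a tree. -/
def positions (t : BTree Λ) : Set (List Bool) := {p | (t.labelAt p).isSome}

/-- The `b`-child relation (`b = false`: child 0, `b = true`: child 1). -/
def childRel (t : BTree Λ) (b : Bool) (p q : List Bool) : Prop :=
  q = p ++ [b] ∧ q ∈ t.positions

/-- Satisfaction of an MSO sentence over the tree (atoms: labels, `↓0`, `↓1`). -/
def TSat (t : BTree Λ) (φ : GMSO Λ Bool) : Prop :=
  GMSO.Models t.positions (fun p l => t.labelAt p = some l) t.childRel φ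

end BTree
/-! ### Special tree terms (STTs) and their graph semantics -/

/-- Special tree terms over vertex labels `Vl` and edge labels `El`,
with colors in `ℕ`. -/
inductive STT (Vl El : Type) : Type
  | atom (i : ℕ) (a : Vl)
  | add (γ : El) (i j : ℕ) (τ : STT Vl El)
  | forget (i : ℕ) (τ : STT Vl El)
  | plus (τ₁ τ₂ : STT Vl El)

namespace STT

variable {Vl El : Type}

/-- The active colors of a term. -/
def activeColors : STT Vl El → Set ℕ
  | .atom i _ => {i}
  | .add _ _ _ τ => τ.activeColors
  | .forget i τ => τ.activeColors \ {i}
  | .plus τ₁ τ₂ => τ₁.activeColors ∪ τ₂.activeColors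

/-- Valid `k`-STTs: colors in `[k] = {1,…,k}`, and the two arguments of `⊕`
have disjoint sets of active colors. -/
def Valid (k : ℕ) : STT Vl El → Prop
  | .atom i _ => 1 ≤ i ∧ i ≤ k
  | .add _ i j τ => 1 ≤ i ∧ i ≤ k ∧ 1 ≤ j ∧ j ≤ k ∧ τ.Valid k
  | .forget i τ => 1 ≤ i ∧ i ≤ k ∧ τ.Valid k
  | .plus τ₁ τ₂ => τ₁.Valid k ∧ τ₂.Valid k ∧ Disjoint τ₁.activeColors τ₂.activeColors

/-- The (partial, injective) coloring `χ_τ`, mapping a color to the position of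
the vertex currently carrying it.  Vertices are identified with the positions
of the atoms in the term (`false` = unique/left child, `true` = right child). -/
def chi : STT Vl El → ℕ → Option (List Bool)
  | .atom i _, j => if j = i then some [] else none
  | .add _ _ _ τ, j => (τ.chi j).map (false :: ·)
  | .forget i τ, j => if j = i then none else (τ.chi j).map (false :: ·)
  | .plus τ₁ τ₂, j =>
      match τ₁.chi j with
      | some p => some (false :: p)
      | none => (τ₂.chi j).map (true :: ·)

/-- The label of a vertex (i.e., of an atom position) of `G_τ`. -/
def vlabel : STT Vl El → List Bool → Option Vl
  | .atom _ a, [] => some a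
  | .add _ _ _ τ, false :: p => τ.vlabel p
  | .forget _ τ, false :: p => τ.vlabel p
  | .plus τ₁ _, false :: p => τ₁.vlabel p
  | .plus _ τ₂, true :: p => τ₂.vlabel p
  | _, _ => none

/-- The vertex set of `G_τ`. -/
def vertices (τ : STT Vl El) : Set (List Bool) := {p | (τ.vlabel p).isSome}

/-- The `γ`-labeled edge relation of `G_τ`. -/
def edgeRel : STT Vl El → El → List Bool → List Bool → Prop
  | .atom _ _, _, _, _ => False
  | .add γ' i j τ, γ, u, v =>
      (∃ u' v', u = false :: u' ∧ v = false :: v' ∧ τ.edgeRel γ u' v') ∨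
      (γ = γ' ∧ ∃ pu pv, τ.chi i = some pu ∧ τ.chi j = some pv ∧
        u = false :: pu ∧ v = false :: pv)
  | .forget _ τ, γ, u, v => ∃ u' v', u = false :: u' ∧ v = false :: v' ∧ τ.edgeRel γ u' v'
  | .plus τ₁ τ₂, γ, u, v =>
      (∃ u' v', u = false :: u' ∧ v = false :: v' ∧ τ₁.edgeRel γ u' v') ∨
      (∃ u' v', u = true :: u' ∧ v = true :: v' ∧ τ₂.edgeRel γ u' v')

/-- `G_τ` is acyclic: the union of all edge relations has an irreflexive
transitive closure. -/
def Acyclic (τ : STT Vl El) : Prop :=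
  ∀ p, ¬ Relation.TransGen (fun u v => ∃ γ, τ.edgeRel γ u v) p p

/-- Satisfaction of a graph-MSO sentence in the graph `G_τ`. -/
def graphSat (τ : STT Vl El) (φ : GMSO Vl El) : Prop :=
  GMSO.Models τ.vertices (fun p a => τ.vlabel p = some a) τ.edgeRel φ

end STT

/-- The label alphabet `Λ^k` of `k`-STTs, seen as labeled binary trees. -/
inductive STTLabel (Vl El : Type) : Type
  | atom (i : ℕ) (a : Vl)
  | add (γ : El) (i j : ℕ)
  | forget (i : ℕ)
  | plus

/-- The binary tree underlying a special tree term. -/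
def STT.toTree {Vl El : Type} : STT Vl El → BTree (STTLabel Vl El)
  | .atom i a => .leaf (.atom i a)
  | .add γ i j τ => .unary (.add γ i j) τ.toTree
  | .forget i τ => .unary (.forget i) τ.toTree
  | .plus τ₁ τ₂ => .binary .plus τ₁.toTree τ₂.toTree
/-! ### Bottom-up tree automata -/

/-- A (nondeterministic) bottom-up tree automaton over `Λ`-labeled trees with
nodes of arity 0, 1 or 2. -/
structure BUTA (Λ : Type) where
  State : Type
  stFintype : Fintype State
  leafT : Λ → State → Prop
  unaryT : Λ → State → State → Prop
  binaryT : Λ → State → State → State → Prop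
  accept : State → Prop

namespace BUTA

variable {Λ : Type}

/-- Bottom-up runs: the state assigned at the root of the given tree. -/
inductive Runs (Aut : BUTA Λ) : BTree Λ → Aut.State → Prop
  | leaf {l s} : Aut.leafT l s → Runs Aut (.leaf l) s
  | unary {l t s' s} : Aut.unaryT l s' s → Runs Aut t s' → Runs Aut (.unary l t) s
  | binary {l t₁ t₂ s₁ s₂ s} : Aut.binaryT l s₁ s₂ s →
      Runs Aut t₁ s₁ → Runs Aut t₂ s₂ → Runs Aut (.binary l t₁ t₂) s

/-- Acceptance: some run reaching an accepting state at the root. -/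
def Accepts (Aut : BUTA Λ) (t : BTree Λ) : Prop := ∃ s, Aut.Runs t s ∧ Aut.accept s

/-- Determinism: the transition relations are partial functions. -/
def Deterministic (Aut : BUTA Λ) : Prop :=
  (∀ l s s', Aut.leafT l s → Aut.leafT l s' → s = s') ∧
  (∀ l s₀ s s', Aut.unaryT l s₀ s → Aut.unaryT l s₀ s' → s = s') ∧
  (∀ l s₁ s₂ s s', Aut.binaryT l s₁ s₂ s → Aut.binaryT l s₁ s₂ s' → s = s')

/-- The number of states. -/
noncomputable def card (Aut : BUTA Λ) : ℕ := @Fintype.card Aut.State Aut.stFintype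

end BUTA
/-! ### CBMs as labeled graphs -/

/-- A structure with domain `dom`, vertex labels in `Alph × Procs` (letter and
process) and edge relations labeled by `{→} ∪ DS` (`none` = process successor)
is a CBM over `(A, Alph)`. -/
def IsCBMGraph (A : Architecture) (Alph : Type) {V : Type}
    (dom : Set V) (lab : V → Option (Alph × A.Procs))
    (edge : Option A.DS → V → V → Prop) : Prop :=
  -- every vertex of the domain is labeled
  (∀ v ∈ dom, ∃ x, lab v = some x) ∧
  -- edges connect vertices of the domain
  (∀ γ u v, edge γ u v → u ∈ dom ∧ v ∈ dom) ∧
  -- on each process, the →-edges form the successor relation of a linear order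
  (∀ p : A.Procs, ∃ l : List V, l.Nodup ∧
    (∀ v, v ∈ l ↔ v ∈ dom ∧ ∃ a, lab v = some (a, p)) ∧
    (∀ u v, u ∈ l → v ∈ l →
      (edge none u v ↔ ∃ n, l[n]? = some u ∧ l[n + 1]? = some v))) ∧
  -- →-edges connect events of the same process
  (∀ u v, edge none u v → ∃ a b p, lab u = some (a, p) ∧ lab v = some (b, p)) ∧
  -- d-edges go from a Writer(d)-event to a Reader(d)-event
  (∀ d u v, edge (some d) u v →
    ∃ a b, lab u = some (a, A.Writer d) ∧ lab v = some (b, A.Reader d)) ∧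
  -- distinct matching edges are pairwise disjoint
  (∀ d₁ d₂ u₁ v₁ u₂ v₂, edge (some d₁) u₁ v₁ → edge (some d₂) u₂ v₂ →
    ¬ (d₁ = d₂ ∧ u₁ = u₂ ∧ v₁ = v₂) → u₁ ≠ u₂ ∧ u₁ ≠ v₂ ∧ v₁ ≠ u₂ ∧ v₁ ≠ v₂) ∧
  -- the transitive closure of the union of all edges is a strict partial order
  (∀ v, ¬ Relation.TransGen (fun u w => ∃ γ, edge γ u w) v v) ∧
  -- LIFO for stacks
  (∀ d, A.kind d = DSKind.stack → ∀ e₁ f₁ e₂ f₂,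
    edge (some d) e₁ f₁ → edge (some d) e₂ f₂ →
    Relation.TransGen (fun u w => ∃ γ, edge γ u w) e₁ e₂ →
    Relation.TransGen (fun u w => ∃ γ, edge γ u w) e₂ f₁ →
    Relation.TransGen (fun u w => ∃ γ, edge γ u w) f₂ f₁) ∧
  -- FIFO for queues
  (∀ d, A.kind d = DSKind.queue → ∀ e₁ f₁ e₂ f₂,
    edge (some d) e₁ f₁ → edge (some d) e₂ f₂ →
    Relation.TransGen (fun u w => ∃ γ, edge γ u w) e₁ e₂ →
    Relation.TransGen (fun u w => ∃ γ, edge γ u w) f₁ f₂)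


/-! ### Colored graphs and their summaries -/

structure CG (A : Architecture) (K V : Type) where
  proc : V → A.Procs
  edge : Option A.DS → V → V → Prop
  ch : K → V → Prop

@[ext] structure CSt (A : Architecture) (K : Type) where
  pr : K → A.Procs → Prop
  lt : K → K → Prop
  succ : K → K → Prop
  hp : K → Prop
  hs : K → Prop
  mat : A.DS → K → K → Prop
  tch : K → Prop
  fmin : A.Procs → Prop
  fmax : A.Procs → Prop
  S : A.DS → Option K → Option K → Prop

theorem ex_min {V : Type} (pos : V → ℕ) (p : V → Prop) (h : ∃ v, p v) :
    ∃ u, p u ∧ ∀ w, p w → pos u ≤ pos w := by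
  classical
  have h' : ∃ n, ∃ v, p v ∧ pos v = n := by obtain ⟨v, hv⟩ := h; exact ⟨_, v, hv, rfl⟩
  obtain ⟨u, hu, hn⟩ := Nat.find_spec h'
  refine ⟨u, hu, fun w hw => ?_⟩
  rw [hn]; exact Nat.find_min' h' ⟨w, hw, rfl⟩

theorem ex_max {V : Type} (pos : V → ℕ) (p : V → Prop) (N : ℕ) (hN : ∀ v, p v → pos v ≤ N)
    (h : ∃ v, p v) : ∃ u, p u ∧ ∀ w, p w → pos w ≤ pos u := by
  obtain ⟨u, hu, hm⟩ := ex_min (fun v => N - pos v) p h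
  refine ⟨u, hu, fun w hw => ?_⟩
  have h1 := hm w hw
  have h2 := hN w hw
  have h3 := hN u hu
  omega

theorem ex_max_fin {V : Type} [Finite V] (pos : V → ℕ) (p : V → Prop)
    (h : ∃ v, p v) : ∃ u, p u ∧ ∀ w, p w → pos w ≤ pos u := by
  obtain ⟨N, hN⟩ := (Set.finite_range pos).bddAbove
  exact ex_max pos p N (fun v _ => hN ⟨v, rfl⟩) h

theorem exists_pos {V : Type} [Finite V] (R : V → V → Prop) (hi : ∀ v, ¬ R v v)
    (ht : ∀ u v w, R u v → R v w → R u w) :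
    ∃ pos : V → ℕ, Function.Injective pos ∧ ∀ u v, R u v → pos u < pos v := by
  classical
  have : Fintype V := Fintype.ofFinite V
  let P : PartialOrder V :=
    { le := fun u v => u = v ∨ R u v
      le_refl := fun u => Or.inl rfl
      le_trans := by
        rintro a b c (rfl | h) (rfl | h')
        · exact Or.inl rfl
        · exact Or.inr h'
        · exact Or.inr h
        · exact Or.inr (ht _ _ _ h h')
      le_antisymm := by
        rintro a b (rfl | h) (h' | h')
        · rfl
        · rfl
        · exact h'.symm
        · exact absurd (ht _ _ _ h h') (hi _) }
  have : Fintype (LinearExtension V) := (inferInstance : Fintype V)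
  let e := monoEquivOfFin (LinearExtension V) (k := Fintype.card (LinearExtension V)) rfl
  refine ⟨fun v => (e.symm (toLinearExtension v) : ℕ), ?_, ?_⟩
  · intro u v h
    exact e.symm.injective (Fin.ext h)
  · intro u v h
    have h1 : toLinearExtension u ≤ toLinearExtension v :=
      toLinearExtension.monotone (show u ≤ v from Or.inr h)
    have h2 : toLinearExtension u ≠ toLinearExtension v := by
      intro h3
      have : u = v := h3
      subst this
      exact hi _ h
    exact e.symm.strictMono (lt_of_le_of_ne h1 h2)

/-- Extension of a relation to options, `none` being a top element. -/
def ltO {K : Type} (lt : K → K → Prop) : Option K → Option K → Prop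
  | some a, some b => lt a b
  | some _, none => True
  | none, _ => False

namespace CG

variable {A : Architecture} {K V : Type}

def col (G : CG A K V) (v : V) : Prop := ∃ c, G.ch c v

structure Good (G : CG A K V) (pos : V → ℕ) : Prop where
  inj : ∀ u v, pos u = pos v → u = v
  ch_fun : ∀ c u v, G.ch c u → G.ch c v → u = v
  ch_inj : ∀ c c' u, G.ch c u → G.ch c' u → c = c'
  edge_lt : ∀ γ u v, G.edge γ u v → pos u < pos v
  succ_proc : ∀ u v, G.edge none u v → G.proc u = G.proc v
  succ_cont : ∀ u v w, G.edge none u v → G.proc w = G.proc u → pos u < pos w → pos w < pos v → False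
  has_pred : ∀ v, ¬ G.col v → (∃ u, G.edge none u v) ∨ ∀ w, G.proc w = G.proc v → pos v ≤ pos w
  has_succ : ∀ v, ¬ G.col v → (∃ u, G.edge none v u) ∨ ∀ w, G.proc w = G.proc v → pos w ≤ pos v
  wr : ∀ d u v, G.edge (some d) u v → G.proc u = A.Writer d ∧ G.proc v = A.Reader d
  disj : ∀ d d' u v u' v', G.edge (some d) u v → G.edge (some d') u' v' →
    (u = u' ∨ u = v' ∨ v = u' ∨ v = v') → d = d' ∧ u = u' ∧ v = v'
  lifo : ∀ d, A.kind d = DSKind.stack → ∀ e₁ f₁ e₂ f₂, G.edge (some d) e₁ f₁ →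
    G.edge (some d) e₂ f₂ → pos e₁ < pos e₂ → pos e₂ < pos f₁ → pos f₂ < pos f₁
  fifo : ∀ d, A.kind d = DSKind.queue → ∀ e₁ f₁ e₂ f₂, G.edge (some d) e₁ f₁ →
    G.edge (some d) e₂ f₂ → pos e₁ < pos e₂ → pos f₁ < pos f₂

/-- The next colored vertex of the same process. -/
def Nx (G : CG A K V) (pos : V → ℕ) (v : V) : Option K → Prop
  | some c => ∃ x, G.ch c x ∧ G.proc x = G.proc v ∧ pos v ≤ pos x ∧
      ∀ c' x', G.ch c' x' → G.proc x' = G.proc v → pos v ≤ pos x' → pos x ≤ pos x'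
  | none => ∀ c x, G.ch c x → G.proc x = G.proc v → pos x < pos v

def sum (G : CG A K V) (pos : V → ℕ) : CSt A K where
  pr c p := ∃ v, G.ch c v ∧ G.proc v = p
  lt c c' := ∃ u v, G.ch c u ∧ G.ch c' v ∧ pos u < pos v
  succ c c' := ∃ u v, G.ch c u ∧ G.ch c' v ∧ G.edge none u v
  hp c := ∃ u v, G.ch c v ∧ G.edge none u v
  hs c := ∃ u v, G.ch c u ∧ G.edge none u v
  mat d c c' := ∃ u v, G.ch c u ∧ G.ch c' v ∧ G.edge (some d) u v
  tch c := ∃ d u v, (G.ch c u ∨ G.ch c v) ∧ G.edge (some d) u v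
  fmin p := ∃ v, ¬ G.col v ∧ G.proc v = p ∧ ∀ w, G.proc w = p → pos v ≤ pos w
  fmax p := ∃ v, ¬ G.col v ∧ G.proc v = p ∧ ∀ w, G.proc w = p → pos w ≤ pos v
  S d g h := ∃ e f, G.edge (some d) e f ∧ G.Nx pos e g ∧ G.Nx pos f h

variable {G : CG A K V} {pos : V → ℕ}

theorem Nx_ex (G : CG A K V) (pos : V → ℕ) (v : V) : ∃ o, G.Nx pos v o := by
  by_cases h : ∃ x, G.col x ∧ G.proc x = G.proc v ∧ pos v ≤ pos x
  · obtain ⟨u, ⟨⟨c, hc⟩, h1, h2⟩, h3⟩ := ex_min pos _ h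
    exact ⟨some c, u, hc, h1, h2, fun c' x' a b d => h3 x' ⟨⟨c', a⟩, b, d⟩⟩
  · refine ⟨none, fun c x hc hx => ?_⟩
    by_contra h'
    exact h ⟨x, ⟨c, hc⟩, hx, by omega⟩

theorem Good.Nx_uniq (hG : G.Good pos) {v : V} {o o' : Option K} (h : G.Nx pos v o)
    (h' : G.Nx pos v o') : o = o' := by
  rcases o with _ | c <;> rcases o' with _ | c'
  · rfl
  · obtain ⟨x, h1, h2, h3, h4⟩ := h'
    have := h _ _ h1 h2
    omega
  · obtain ⟨x, h1, h2, h3, h4⟩ := h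
    have := h' _ _ h1 h2
    omega
  · obtain ⟨x, h1, h2, h3, h4⟩ := h
    obtain ⟨x', h1', h2', h3', h4'⟩ := h'
    have a := h4 _ _ h1' h2' h3'
    have b := h4' _ _ h1 h2 h3
    have : x = x' := hG.inj _ _ (by omega)
    subst this
    rw [hG.ch_inj _ _ _ h1 h1']

theorem Nx_col {c : K} {x : V} (h : G.ch c x) : G.Nx pos x (some c) :=
  ⟨x, h, rfl, le_rfl, fun _ _ _ _ h => h⟩

/-- comparing a colored vertex with another vertex -/
theorem Good.Nx_cmp (hG : G.Good pos) {i : K} {x v : V} {g : Option K} (hx : G.ch i x)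
    (hp : G.proc x = G.proc v) (hg : G.Nx pos v g) :
    ltO (G.sum pos).lt (some i) g ↔ pos x < pos v := by
  rcases g with _ | c
  · simp only [ltO, true_iff]
    exact hg _ _ hx hp
  · obtain ⟨y, h1, h2, h3, h4⟩ := hg
    simp only [ltO, sum]
    constructor
    · rintro ⟨a, b, ha, hb, hab⟩
      have := hG.ch_fun _ _ _ ha hx
      have := hG.ch_fun _ _ _ hb h1
      subst a b
      by_contra hc
      have := h4 _ _ hx hp (by omega)
      omega
    · intro h
      exact ⟨x, y, hx, h1, by omega⟩

theorem Good.lt_iff (hG : G.Good pos) {i j : K} {x y : V} (hx : G.ch i x) (hy : G.ch j y) :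
    (G.sum pos).lt i j ↔ pos x < pos y := by
  constructor
  · rintro ⟨a, b, ha, hb, hab⟩
    have := hG.ch_fun _ _ _ ha hx
    have := hG.ch_fun _ _ _ hb hy
    subst a b
    exact hab
  · intro h
    exact ⟨x, y, hx, hy, h⟩

theorem Good.pr_iff (hG : G.Good pos) {i : K} {x : V} (hx : G.ch i x) (p : A.Procs) :
    (G.sum pos).pr i p ↔ G.proc x = p := by
  constructor
  · rintro ⟨a, ha, hab⟩
    have := hG.ch_fun _ _ _ ha hx
    subst a
    exact hab
  · intro h
    exact ⟨x, hx, h⟩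

theorem Good.lemA (hG : G.Good pos) {v x : V} (hp : G.proc v = G.proc x) (hlt : pos v < pos x)
    (hc : ∀ c w, G.ch c w → G.proc w = G.proc x → pos v ≤ pos w → pos w < pos x → False) :
    ∃ u, G.edge none u x := by
  obtain ⟨u, ⟨h1, h2, h3⟩, h4⟩ := ex_max pos
    (fun w => G.proc w = G.proc x ∧ pos v ≤ pos w ∧ pos w < pos x) (pos x)
    (fun v hv => hv.2.2.le) ⟨v, hp, le_rfl, hlt⟩
  have hu : ¬ G.col u := fun ⟨c, hcu⟩ => hc _ _ hcu h1 h2 h3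
  rcases hG.has_succ u hu with ⟨y, hy⟩ | hm
  · have a1 := hG.edge_lt _ _ _ hy
    have a2 := hG.succ_proc _ _ hy
    by_cases hyx : y = x
    · subst hyx; exact ⟨u, hy⟩
    · have : pos y ≠ pos x := fun h => hyx (hG.inj _ _ h)
      by_cases hlt' : pos y < pos x
      · have := h4 y ⟨by rw [← a2, h1], by omega, hlt'⟩
        omega
      · exact (hG.succ_cont u y x hy h1.symm h3 (by omega)).elim
  · have := hm x h1.symm
    omega

theorem Good.lemA' (hG : G.Good pos) {v x : V} (hp : G.proc v = G.proc x) (hlt : pos v < pos x)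
    (hc : ∀ c w, G.ch c w → G.proc w = G.proc x → pos v < pos w → pos w ≤ pos x → False) :
    ∃ u, G.edge none v u := by
  obtain ⟨u, ⟨h1, h2, h3⟩, h4⟩ := ex_min pos
    (fun w => G.proc w = G.proc x ∧ pos v < pos w ∧ pos w ≤ pos x) ⟨x, rfl, hlt, le_rfl⟩
  have hu : ¬ G.col u := fun ⟨c, hcu⟩ => hc _ _ hcu h1 h2 h3
  rcases hG.has_pred u hu with ⟨y, hy⟩ | hm
  · have a1 := hG.edge_lt _ _ _ hy
    have a2 := hG.succ_proc _ _ hy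
    by_cases hyx : y = v
    · subst hyx; exact ⟨u, hy⟩
    · have : pos y ≠ pos v := fun h => hyx (hG.inj _ _ h)
      by_cases hlt' : pos v < pos y
      · have := h4 y ⟨by rw [a2, h1], by omega, by omega⟩
        omega
      · exact (hG.succ_cont y u v hy (by rw [a2, h1, hp]) (by omega) h2).elim
  · have := hm v (by rw [h1, hp])
    omega

end CG

namespace CSt

variable {A : Architecture} {K : Type}

def act (s : CSt A K) (c : K) : Prop := ∃ p, s.pr c p

def atomSt (A : Architecture) {K : Type} (i : K) (p : A.Procs) : CSt A K where
  pr c q := c = i ∧ q = p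
  lt _ _ := False
  succ _ _ := False
  hp _ := False
  hs _ := False
  mat _ _ _ := False
  tch _ := False
  fmin _ := False
  fmax _ := False
  S _ _ _ := False

def AddOkD (s : CSt A K) (d : A.DS) (i j : K) : Prop :=
  (A.kind d = DSKind.queue → ∀ g h, s.S d g h → (ltO s.lt (some i) g ↔ ltO s.lt (some j) h)) ∧
  (A.kind d = DSKind.stack → ∀ g h, s.S d g h →
    (ltO s.lt (some i) g → ¬ ltO s.lt (some j) g → ¬ ltO s.lt (some j) h) ∧
    (¬ ltO s.lt (some i) g → ltO s.lt (some i) h → ltO s.lt (some j) h))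

def AddOk (s : CSt A K) (γ : Option A.DS) (i j : K) : Prop :=
  ∀ p q, s.pr i p → s.pr j q →
    s.lt i j ∧
    (γ = none → p = q ∧ (∀ c, s.pr c p → s.lt i c → ¬ s.lt c j) ∧ (s.succ i j ∨ ¬ s.hp j)) ∧
    (∀ d, γ = some d → p = A.Writer d ∧ q = A.Reader d ∧
      (s.mat d i j ∨ (¬ s.tch i ∧ ¬ s.tch j ∧ s.AddOkD d i j)))

def addUpd (s : CSt A K) (γ : Option A.DS) (i j : K) : CSt A K where
  pr := s.pr
  lt := s.lt
  succ a b := s.succ a b ∨ (γ = none ∧ a = i ∧ b = j ∧ s.act i ∧ s.act j)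
  hp c := s.hp c ∨ (γ = none ∧ c = j ∧ s.act i ∧ s.act j)
  hs c := s.hs c ∨ (γ = none ∧ c = i ∧ s.act i ∧ s.act j)
  mat d a b := s.mat d a b ∨ (γ = some d ∧ a = i ∧ b = j ∧ s.act i ∧ s.act j)
  tch c := s.tch c ∨ ((∃ d, γ = some d) ∧ (c = i ∨ c = j) ∧ s.act i ∧ s.act j)
  fmin := s.fmin
  fmax := s.fmax
  S d g h := s.S d g h ∨ (γ = some d ∧ g = some i ∧ h = some j ∧ s.act i ∧ s.act j)

def ForgetOk (s : CSt A K) (i : K) : Prop :=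
  ∀ p, s.pr i p → (s.hp i ∨ ∀ c, s.pr c p → ¬ s.lt c i) ∧ (s.hs i ∨ ∀ c, s.pr c p → ¬ s.lt i c)

def NxS (s : CSt A K) (i : K) : Option K → Prop
  | some c => ∃ p, s.pr i p ∧ s.pr c p ∧ s.lt i c ∧ ∀ c', s.pr c' p → s.lt i c' → ¬ s.lt c' c
  | none => ∀ c p, s.pr i p → s.pr c p → ¬ s.lt i c

def NxF (s : CSt A K) (i : K) (g0 g : Option K) : Prop :=
  (g0 ≠ some i ∧ g = g0) ∨ (g0 = some i ∧ s.NxS i g)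

def forgetUpd (s : CSt A K) (i : K) : CSt A K where
  pr c p := c ≠ i ∧ s.pr c p
  lt a b := a ≠ i ∧ b ≠ i ∧ s.lt a b
  succ a b := a ≠ i ∧ b ≠ i ∧ s.succ a b
  hp c := c ≠ i ∧ s.hp c
  hs c := c ≠ i ∧ s.hs c
  mat d a b := a ≠ i ∧ b ≠ i ∧ s.mat d a b
  tch c := c ≠ i ∧ s.tch c
  fmin p := s.fmin p ∨ (s.pr i p ∧ ¬ s.hp i)
  fmax p := s.fmax p ∨ (s.pr i p ∧ ¬ s.hs i)
  S d g h := ∃ g0 h0, s.S d g0 h0 ∧ s.NxF i g0 g ∧ s.NxF i h0 h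

end CSt

namespace CG

variable {A : Architecture} {K V : Type}

def atom (A : Architecture) {K : Type} (i : K) (p : A.Procs) : CG A K Unit where
  proc _ := p
  edge _ _ _ := False
  ch c _ := c = i

def add (G : CG A K V) (γ : Option A.DS) (i j : K) : CG A K V where
  proc := G.proc
  edge γ' u v := G.edge γ' u v ∨ (γ' = γ ∧ G.ch i u ∧ G.ch j v)
  ch := G.ch

def forget (G : CG A K V) (i : K) : CG A K V where
  proc := G.proc
  edge := G.edge
  ch c v := c ≠ i ∧ G.ch c v

theorem atom_good (i : K) (p : A.Procs) (pos : Unit → ℕ) : (atom A i p).Good pos := by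
  constructor <;> simp [atom, col]

theorem atom_sum (i : K) (p : A.Procs) (pos : Unit → ℕ) :
    (atom A i p).sum pos = CSt.atomSt A i p := by
  ext <;> simp [atom, CSt.atomSt, sum, col, eq_comm]

variable {G : CG A K V} {pos : V → ℕ}

theorem add_good_of {γ : Option A.DS} {i j : K} (h : (G.add γ i j).Good pos) : G.Good pos where
  inj := h.inj
  ch_fun := h.ch_fun
  ch_inj := h.ch_inj
  edge_lt _ _ _ e := h.edge_lt _ _ _ (Or.inl e)
  succ_proc _ _ e := h.succ_proc _ _ (Or.inl e)
  succ_cont _ _ _ e := h.succ_cont _ _ _ (Or.inl e)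
  has_pred v hv := by
    rcases h.has_pred v hv with ⟨u, hu | hu⟩ | h'
    · exact Or.inl ⟨u, hu⟩
    · exact (hv ⟨_, hu.2.2⟩).elim
    · exact Or.inr h'
  has_succ v hv := by
    rcases h.has_succ v hv with ⟨u, hu | hu⟩ | h'
    · exact Or.inl ⟨u, hu⟩
    · exact (hv ⟨_, hu.2.1⟩).elim
    · exact Or.inr h'
  wr _ _ _ e := h.wr _ _ _ (Or.inl e)
  disj _ _ _ _ _ _ e e' := h.disj _ _ _ _ _ _ (Or.inl e) (Or.inl e')
  lifo d hd _ _ _ _ e e' := h.lifo d hd _ _ _ _ (Or.inl e) (Or.inl e')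
  fifo d hd _ _ _ _ e e' := h.fifo d hd _ _ _ _ (Or.inl e) (Or.inl e')

theorem Good.act_iff {i : K} : (G.sum pos).act i ↔ ∃ x, G.ch i x := by
  constructor
  · rintro ⟨p, x, hx, -⟩; exact ⟨x, hx⟩
  · rintro ⟨x, hx⟩; exact ⟨_, x, hx, rfl⟩

theorem add_ok_of {γ : Option A.DS} {i j : K} (h : (G.add γ i j).Good pos) :
    (G.sum pos).AddOk γ i j := by
  have hG := add_good_of h
  rintro p q ⟨x, hx, rfl⟩ ⟨y, hy, rfl⟩
  have hnew : (G.add γ i j).edge γ x y := Or.inr ⟨rfl, hx, hy⟩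
  have hxy := h.edge_lt _ _ _ hnew
  refine ⟨⟨x, y, hx, hy, hxy⟩, ?_, ?_⟩
  · rintro rfl
    refine ⟨h.succ_proc _ _ hnew, ?_, ?_⟩
    · rintro c ⟨z, hz, hzp⟩ h1 h2
      rw [hG.lt_iff hx hz] at h1
      rw [hG.lt_iff hz hy] at h2
      exact h.succ_cont _ _ _ hnew hzp h1 h2
    · by_contra hcon
      push Not at hcon
      obtain ⟨hns, u, v, hv, huv⟩ := hcon
      have := hG.ch_fun _ _ _ hv hy
      subst v
      have a1 := hG.edge_lt _ _ _ huv
      have a2 := hG.succ_proc _ _ huv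
      have a3 : G.proc x = G.proc y := h.succ_proc _ _ hnew
      rcases lt_trichotomy (pos u) (pos x) with h1 | h1 | h1
      · exact hG.succ_cont _ _ x huv (by rw [a2, a3]) h1 hxy
      · have := hG.inj _ _ h1
        subst u
        exact hns ⟨x, y, hx, hy, huv⟩
      · exact h.succ_cont _ _ u hnew (by simp only [add]; rw [a2, a3]) h1 a1
  · rintro d rfl
    have hw := h.wr _ _ _ hnew
    refine ⟨hw.1, hw.2, ?_⟩
    by_cases hm : (G.sum pos).mat d i j
    · exact Or.inl hm
    right
    have key : ∀ d' u v, G.edge (some d') u v → ¬ (u = x ∨ u = y ∨ v = x ∨ v = y) := by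
      intro d' u v he hor
      have := h.disj _ _ _ _ _ _ (Or.inl he) hnew (by tauto)
      obtain ⟨rfl, rfl, rfl⟩ := this
      exact hm ⟨_, _, hx, hy, he⟩
    have cmpx := @Good.Nx_cmp _ _ _ _ _ hG i x
    have cmpy := @Good.Nx_cmp _ _ _ _ _ hG j y
    refine ⟨?_, ?_, ?_, ?_⟩
    · rintro ⟨d', u, v, hc, he⟩
      have k := key d' u v he
      rcases hc with hc | hc
      · have := hG.ch_fun _ _ _ hc hx; tauto
      · have := hG.ch_fun _ _ _ hc hx; tauto
    · rintro ⟨d', u, v, hc, he⟩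
      have k := key d' u v he
      rcases hc with hc | hc
      · have := hG.ch_fun _ _ _ hc hy; tauto
      · have := hG.ch_fun _ _ _ hc hy; tauto
    · rintro hd g hh ⟨e, f, he, hg, hf⟩
      have w := hG.wr _ _ _ he
      have k := key d e f he
      rw [cmpx hx (hw.1.trans w.1.symm) hg, cmpy hy (hw.2.trans w.2.symm) hf]
      constructor
      · intro h1
        exact h.fifo d hd _ _ _ _ hnew (Or.inl he) h1
      · intro h1
        by_contra h2
        have : pos e ≠ pos x := fun h3 => k (Or.inl (hG.inj _ _ h3))
        have := h.fifo d hd _ _ _ _ (Or.inl he) hnew (by omega)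
        omega
    · rintro hd g hh ⟨e, f, he, hg, hf⟩
      have w := hG.wr _ _ _ he
      have k := key d e f he
      have wre := A.stack_wr d hd
      have hwx : G.proc x = A.Writer d := hw.1
      have hwy : G.proc y = A.Reader d := hw.2
      rw [cmpx hx (hw.1.trans w.1.symm) hg, cmpy hy (hw.2.trans w.2.symm) hf,
        cmpy hy (by rw [hwy, w.1, wre]) hg, cmpx hx (by rw [hwx, w.2, wre]) hf]
      have k1 : pos e ≠ pos x := fun h3 => k (Or.inl (hG.inj _ _ h3))
      have k2 : pos e ≠ pos y := fun h3 => k (Or.inr (Or.inl (hG.inj _ _ h3)))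
      have k3 : pos f ≠ pos x := fun h3 => k (Or.inr (Or.inr (Or.inl (hG.inj _ _ h3))))
      have k4 : pos f ≠ pos y := fun h3 => k (Or.inr (Or.inr (Or.inr (hG.inj _ _ h3))))
      have l1 := h.lifo d hd _ _ _ _ hnew (Or.inl he)
      have l2 := h.lifo d hd _ _ _ _ (Or.inl he) hnew
      constructor
      · intro h1 h2
        have := l1 h1 (by omega)
        omega
      · intro h1 h2
        have := l2 (by omega) h2
        omega

theorem add_good {γ : Option A.DS} {i j : K} (hG : G.Good pos) (hok : (G.sum pos).AddOk γ i j) :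
    (G.add γ i j).Good pos := by
  by_cases hact : (∃ x, G.ch i x) ∧ (∃ y, G.ch j y)
  swap
  · have : G.add γ i j = G := by
      cases G
      simp only [add, mk.injEq, and_true, true_and]
      funext a b c
      apply propext
      constructor
      · rintro (h | h)
        · exact h
        · exact (hact ⟨⟨_, h.2.1⟩, ⟨_, h.2.2⟩⟩).elim
      · exact Or.inl
    rw [this]; exact hG
  obtain ⟨⟨x, hx⟩, ⟨y, hy⟩⟩ := hact
  obtain ⟨hlt, hn, hs⟩ := hok _ _ ⟨x, hx, rfl⟩ ⟨y, hy, rfl⟩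
  rw [hG.lt_iff hx hy] at hlt
  have hE : ∀ γ' u v, (G.add γ i j).edge γ' u v ↔ G.edge γ' u v ∨ (γ' = γ ∧ u = x ∧ v = y) := by
    intro γ' u v
    simp only [add]
    constructor
    · rintro (h | ⟨h, h1, h2⟩)
      · exact Or.inl h
      · exact Or.inr ⟨h, hG.ch_fun _ _ _ h1 hx, hG.ch_fun _ _ _ h2 hy⟩
    · rintro (h | ⟨h, rfl, rfl⟩)
      · exact Or.inl h
      · exact Or.inr ⟨h, hx, hy⟩
  have cmpx := @Good.Nx_cmp _ _ _ _ _ hG i x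
  have cmpy := @Good.Nx_cmp _ _ _ _ _ hG j y
  have htx : ¬ (G.sum pos).tch i → ∀ d u v, G.edge (some d) u v → pos u ≠ pos x ∧ pos v ≠ pos x := by
    intro ht d u v he
    refine ⟨fun h => ht ⟨d, u, v, Or.inl ?_, he⟩, fun h => ht ⟨d, u, v, Or.inr ?_, he⟩⟩
    · rw [hG.inj _ _ h]; exact hx
    · rw [hG.inj _ _ h]; exact hx
  have hty : ¬ (G.sum pos).tch j → ∀ d u v, G.edge (some d) u v → pos u ≠ pos y ∧ pos v ≠ pos y := by
    intro ht d u v he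
    refine ⟨fun h => ht ⟨d, u, v, Or.inl ?_, he⟩, fun h => ht ⟨d, u, v, Or.inr ?_, he⟩⟩
    · rw [hG.inj _ _ h]; exact hy
    · rw [hG.inj _ _ h]; exact hy
  have hmat : ∀ d, (G.sum pos).mat d i j → G.edge (some d) x y := by
    rintro d ⟨u, v, hu, hv, he⟩
    rw [← hG.ch_fun _ _ _ hu hx, ← hG.ch_fun _ _ _ hv hy]; exact he
  refine ⟨hG.inj, hG.ch_fun, hG.ch_inj, ?_, ?_, ?_, ?_, ?_, ?_, ?_, ?_, ?_⟩
  · intro γ' u v he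
    rw [hE] at he
    rcases he with he | ⟨-, rfl, rfl⟩
    · exact hG.edge_lt _ _ _ he
    · exact hlt
  · intro u v he
    rw [hE] at he
    rcases he with he | ⟨h, rfl, rfl⟩
    · exact hG.succ_proc _ _ he
    · exact (hn h.symm).1
  · intro u v w he hp h1 h2
    rw [hE] at he
    rcases he with he | ⟨h, rfl, rfl⟩
    · exact hG.succ_cont _ _ _ he hp h1 h2
    · obtain ⟨hpp, hbet, hs'⟩ := hn h.symm
      have hp' : G.proc w = G.proc u := hp
      rcases hs' with ⟨u', v', hu', hv', he⟩ | hnp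
      · have := hG.ch_fun _ _ _ hu' hx
        have := hG.ch_fun _ _ _ hv' hy
        subst u' v'
        exact hG.succ_cont _ _ _ he hp h1 h2
      · obtain ⟨z, hz⟩ := hG.lemA (v := w) (x := v) (by rw [hp', hpp]) h2 (by
          intro c z hcz hzp h3 h4
          refine hbet c ⟨z, hcz, by rw [hzp, hpp]⟩ ?_ ?_
          · rw [hG.lt_iff hx hcz]; omega
          · rw [hG.lt_iff hcz hy]; omega)
        exact hnp ⟨z, v, hy, hz⟩
  · intro v hv
    rcases hG.has_pred v hv with ⟨u, hu⟩ | h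
    · exact Or.inl ⟨u, Or.inl hu⟩
    · exact Or.inr h
  · intro v hv
    rcases hG.has_succ v hv with ⟨u, hu⟩ | h
    · exact Or.inl ⟨u, Or.inl hu⟩
    · exact Or.inr h
  · intro d u v he
    rw [hE] at he
    rcases he with he | ⟨h, rfl, rfl⟩
    · exact hG.wr _ _ _ he
    · exact ⟨(hs d h.symm).1, (hs d h.symm).2.1⟩
  · intro d d' u v u' v' he he' hor
    rw [hE] at he he'
    rcases he with he | ⟨h, h1, h2⟩ <;> rcases he' with he' | ⟨h', h1', h2'⟩
    · exact hG.disj _ _ _ _ _ _ he he' hor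
    · rcases (hs d' h'.symm).2.2 with hm | ⟨t1, t2, -⟩
      · subst h1' h2'
        exact hG.disj _ _ _ _ _ _ he (hmat _ hm) hor
      · have a := htx t1 _ _ _ he
        have b := hty t2 _ _ _ he
        subst h1' h2'
        rcases hor with rfl | rfl | rfl | rfl <;> tauto
    · rcases (hs d h.symm).2.2 with hm | ⟨t1, t2, -⟩
      · subst h1 h2
        exact hG.disj _ _ _ _ _ _ (hmat _ hm) he' hor
      · have a := htx t1 _ _ _ he'
        have b := hty t2 _ _ _ he'
        subst h1 h2
        rcases hor with rfl | rfl | rfl | rfl <;> tauto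
    · rw [← h'] at h
      exact ⟨Option.some.inj h, by rw [h1, h1'], by rw [h2, h2']⟩
  · intro d hd e₁ f₁ e₂ f₂ he he' h1 h2
    rw [hE] at he he'
    rcases he with he | ⟨h, rfl, rfl⟩ <;> rcases he' with he' | ⟨h', rfl, rfl⟩
    · exact hG.lifo _ hd _ _ _ _ he he' h1 h2
    · obtain ⟨w1, w2, hm | ⟨t1, t2, -, hl⟩⟩ := hs d h'.symm
      · exact hG.lifo _ hd _ _ _ _ he (hmat _ hm) h1 h2
      · obtain ⟨g, hg⟩ := G.Nx_ex pos e₁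
        obtain ⟨g', hg'⟩ := G.Nx_ex pos f₁
        have w := hG.wr _ _ _ he
        have wre := A.stack_wr d hd
        have := (hl hd g g' ⟨_, _, he, hg, hg'⟩).2
        rw [cmpx hx (w1.trans w.1.symm) hg, cmpy hy (w2.trans w.2.symm) hg',
          cmpx hx (by rw [w1, w.2, wre]) hg'] at this
        exact this (by omega) h2
    · obtain ⟨w1, w2, hm | ⟨t1, t2, -, hl⟩⟩ := hs d h.symm
      · exact hG.lifo _ hd _ _ _ _ (hmat _ hm) he' h1 h2
      · obtain ⟨g, hg⟩ := G.Nx_ex pos e₂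
        obtain ⟨g', hg'⟩ := G.Nx_ex pos f₂
        have w := hG.wr _ _ _ he'
        have wre := A.stack_wr d hd
        have := (hl hd g g' ⟨_, _, he', hg, hg'⟩).1
        rw [cmpx hx (w1.trans w.1.symm) hg, cmpy hy (w2.trans w.2.symm) hg',
          cmpy hy (by rw [w2, w.1, wre]) hg] at this
        have a := this h1 (by omega)
        have b := hty t2 _ _ _ he'
        omega
    · omega
  · intro d hd e₁ f₁ e₂ f₂ he he' h1
    rw [hE] at he he'
    rcases he with he | ⟨h, rfl, rfl⟩ <;> rcases he' with he' | ⟨h', rfl, rfl⟩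
    · exact hG.fifo _ hd _ _ _ _ he he' h1
    · obtain ⟨w1, w2, hm | ⟨t1, t2, hl, -⟩⟩ := hs d h'.symm
      · exact hG.fifo _ hd _ _ _ _ he (hmat _ hm) h1
      · obtain ⟨g, hg⟩ := G.Nx_ex pos e₁
        obtain ⟨g', hg'⟩ := G.Nx_ex pos f₁
        have w := hG.wr _ _ _ he
        have := (hl hd g g' ⟨_, _, he, hg, hg'⟩)
        rw [cmpx hx (w1.trans w.1.symm) hg, cmpy hy (w2.trans w.2.symm) hg'] at this
        have b := hty t2 _ _ _ he
        omega
    · obtain ⟨w1, w2, hm | ⟨t1, t2, hl, -⟩⟩ := hs d h.symm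
      · exact hG.fifo _ hd _ _ _ _ (hmat _ hm) he' h1
      · obtain ⟨g, hg⟩ := G.Nx_ex pos e₂
        obtain ⟨g', hg'⟩ := G.Nx_ex pos f₂
        have w := hG.wr _ _ _ he'
        have := (hl hd g g' ⟨_, _, he', hg, hg'⟩)
        rw [cmpx hx (w1.trans w.1.symm) hg, cmpy hy (w2.trans w.2.symm) hg'] at this
        omega
    · omega

theorem add_sum {γ : Option A.DS} {i j : K} (hG : G.Good pos) :
    (G.add γ i j).sum pos = (G.sum pos).addUpd γ i j := by
  have hNx : ∀ v o, (G.add γ i j).Nx pos v o ↔ G.Nx pos v o := by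
    intro v o; cases o <;> rfl
  ext
  · rfl
  · rfl
  · rename_i a b
    simp only [CSt.addUpd, Good.act_iff]
    constructor
    · rintro ⟨u, v, hu, hv, he | ⟨h, h1, h2⟩⟩
      · exact Or.inl ⟨u, v, hu, hv, he⟩
      · exact Or.inr ⟨h.symm, hG.ch_inj _ _ _ hu h1, hG.ch_inj _ _ _ hv h2, ⟨_, h1⟩, ⟨_, h2⟩⟩
    · rintro (⟨u, v, hu, hv, he⟩ | ⟨rfl, rfl, rfl, ⟨x, hx⟩, ⟨y, hy⟩⟩)
      · exact ⟨u, v, hu, hv, Or.inl he⟩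
      · exact ⟨x, y, hx, hy, Or.inr ⟨rfl, hx, hy⟩⟩
  · rename_i a
    simp only [CSt.addUpd, Good.act_iff]
    constructor
    · rintro ⟨u, v, hv, he | ⟨h, h1, h2⟩⟩
      · exact Or.inl ⟨u, v, hv, he⟩
      · exact Or.inr ⟨h.symm, hG.ch_inj _ _ _ hv h2, ⟨_, h1⟩, ⟨_, h2⟩⟩
    · rintro (⟨u, v, hv, he⟩ | ⟨rfl, rfl, ⟨x, hx⟩, ⟨y, hy⟩⟩)
      · exact ⟨u, v, hv, Or.inl he⟩
      · exact ⟨x, y, hy, Or.inr ⟨rfl, hx, hy⟩⟩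
  · rename_i a
    simp only [CSt.addUpd, Good.act_iff]
    constructor
    · rintro ⟨u, v, hv, he | ⟨h, h1, h2⟩⟩
      · exact Or.inl ⟨u, v, hv, he⟩
      · exact Or.inr ⟨h.symm, hG.ch_inj _ _ _ hv h1, ⟨_, h1⟩, ⟨_, h2⟩⟩
    · rintro (⟨u, v, hv, he⟩ | ⟨rfl, rfl, ⟨x, hx⟩, ⟨y, hy⟩⟩)
      · exact ⟨u, v, hv, Or.inl he⟩
      · exact ⟨x, y, hx, Or.inr ⟨rfl, hx, hy⟩⟩
  · rename_i d a b
    simp only [CSt.addUpd, Good.act_iff]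
    constructor
    · rintro ⟨u, v, hu, hv, he | ⟨h, h1, h2⟩⟩
      · exact Or.inl ⟨u, v, hu, hv, he⟩
      · exact Or.inr ⟨h.symm, hG.ch_inj _ _ _ hu h1, hG.ch_inj _ _ _ hv h2, ⟨_, h1⟩, ⟨_, h2⟩⟩
    · rintro (⟨u, v, hu, hv, he⟩ | ⟨rfl, rfl, rfl, ⟨x, hx⟩, ⟨y, hy⟩⟩)
      · exact ⟨u, v, hu, hv, Or.inl he⟩
      · exact ⟨x, y, hx, hy, Or.inr ⟨rfl, hx, hy⟩⟩
  · rename_i a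
    simp only [CSt.addUpd, Good.act_iff]
    constructor
    · rintro ⟨d, u, v, huv, he | ⟨h, h1, h2⟩⟩
      · exact Or.inl ⟨d, u, v, huv, he⟩
      · refine Or.inr ⟨⟨d, h.symm⟩, ?_, ⟨_, h1⟩, ⟨_, h2⟩⟩
        rcases huv with hu | hv
        · exact Or.inl (hG.ch_inj _ _ _ hu h1)
        · exact Or.inr (hG.ch_inj _ _ _ hv h2)
    · rintro (⟨d, u, v, hv, he⟩ | ⟨⟨d, rfl⟩, hor, ⟨x, hx⟩, ⟨y, hy⟩⟩)
      · exact ⟨d, u, v, hv, Or.inl he⟩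
      · refine ⟨d, x, y, ?_, Or.inr ⟨rfl, hx, hy⟩⟩
        rcases hor with rfl | rfl
        · exact Or.inl hx
        · exact Or.inr hy
  · rfl
  · rfl
  · rename_i d g h
    simp only [CSt.addUpd, Good.act_iff]
    constructor
    · rintro ⟨e, f, he | ⟨hh, h1, h2⟩, hg, hf⟩
      · exact Or.inl ⟨e, f, he, (hNx _ _).1 hg, (hNx _ _).1 hf⟩
      · exact Or.inr ⟨hh.symm, hG.Nx_uniq ((hNx _ _).1 hg) (Nx_col h1),
          hG.Nx_uniq ((hNx _ _).1 hf) (Nx_col h2), ⟨_, h1⟩, ⟨_, h2⟩⟩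
    · rintro (⟨e, f, he, hg, hf⟩ | ⟨rfl, rfl, rfl, ⟨x, hx⟩, ⟨y, hy⟩⟩)
      · exact ⟨e, f, Or.inl he, (hNx _ _).2 hg, (hNx _ _).2 hf⟩
      · exact ⟨x, y, Or.inr ⟨rfl, hx, hy⟩, Nx_col hx, Nx_col hy⟩

end CG

namespace CG

variable {A : Architecture} {K V : Type} {G : CG A K V} {pos : V → ℕ}

theorem forget_col {i : K} {v : V} (h : ¬ G.col v) : ¬ (G.forget i).col v :=
  fun ⟨c, hc⟩ => h ⟨c, hc.2⟩

theorem forget_good_of {i : K} (hf : ∀ c u v, G.ch c u → G.ch c v → u = v)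
    (hi : ∀ c c' u, G.ch c u → G.ch c' u → c = c') (h : (G.forget i).Good pos) : G.Good pos where
  inj := h.inj
  ch_fun := hf
  ch_inj := hi
  edge_lt := h.edge_lt
  succ_proc := h.succ_proc
  succ_cont := h.succ_cont
  has_pred v hv := h.has_pred v (forget_col hv)
  has_succ v hv := h.has_succ v (forget_col hv)
  wr := h.wr
  disj := h.disj
  lifo := h.lifo
  fifo := h.fifo

theorem forget_ok_of {i : K} (hG : G.Good pos) (h : (G.forget i).Good pos) :
    (G.sum pos).ForgetOk i := by
  rintro p ⟨x, hx, rfl⟩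
  have hxc : ¬ (G.forget i).col x := fun ⟨c, hc⟩ => hc.1 (hG.ch_inj _ _ _ hc.2 hx)
  constructor
  · rcases h.has_pred x hxc with ⟨u, hu⟩ | hm
    · exact Or.inl ⟨u, x, hx, hu⟩
    · right
      rintro c ⟨y, hy, hyp⟩ hlt
      rw [hG.lt_iff hy hx] at hlt
      have := hm y hyp
      omega
  · rcases h.has_succ x hxc with ⟨u, hu⟩ | hm
    · exact Or.inl ⟨x, u, hx, hu⟩
    · right
      rintro c ⟨y, hy, hyp⟩ hlt
      rw [hG.lt_iff hx hy] at hlt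
      have := hm y hyp
      omega

theorem forget_good {i : K} (hG : G.Good pos) (hok : (G.sum pos).ForgetOk i) :
    (G.forget i).Good pos where
  inj := hG.inj
  ch_fun c u v h h' := hG.ch_fun c u v h.2 h'.2
  ch_inj c c' u h h' := hG.ch_inj c c' u h.2 h'.2
  edge_lt := hG.edge_lt
  succ_proc := hG.succ_proc
  succ_cont := hG.succ_cont
  has_pred x hx := by
    by_cases hc : G.col x
    · obtain ⟨c, hc⟩ := hc
      have : c = i := by
        by_contra hne; exact hx ⟨c, hne, hc⟩
      subst this
      rcases (hok _ ⟨x, hc, rfl⟩).1 with ⟨u, v, hv, he⟩ | hn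
      · have := hG.ch_fun _ _ _ hv hc
        subst v
        exact Or.inl ⟨u, he⟩
      · by_cases hm : ∀ w, G.proc w = G.proc x → pos x ≤ pos w
        · exact Or.inr hm
        · push Not at hm
          obtain ⟨w, hw, hlt⟩ := hm
          refine Or.inl (hG.lemA hw hlt ?_)
          intro c' z hz hzp _ h2
          exact hn c' ⟨z, hz, hzp⟩ ((hG.lt_iff hz hc).2 h2)
    · exact hG.has_pred x hc
  has_succ x hx := by
    by_cases hc : G.col x
    · obtain ⟨c, hc⟩ := hc
      have : c = i := by
        by_contra hne; exact hx ⟨c, hne, hc⟩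
      subst this
      rcases (hok _ ⟨x, hc, rfl⟩).2 with ⟨u, v, hv, he⟩ | hn
      · have := hG.ch_fun _ _ _ hv hc
        subst u
        exact Or.inl ⟨v, he⟩
      · by_cases hm : ∀ w, G.proc w = G.proc x → pos w ≤ pos x
        · exact Or.inr hm
        · push Not at hm
          obtain ⟨w, hw, hlt⟩ := hm
          refine Or.inl (hG.lemA' hw.symm hlt ?_)
          intro c' z hz hzp h1 _
          exact hn c' ⟨z, hz, by rw [hzp, hw]⟩ ((hG.lt_iff hc hz).2 h1)
    · exact hG.has_succ x hc
  wr := hG.wr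
  disj := hG.disj
  lifo := hG.lifo
  fifo := hG.fifo

theorem forget_Nx {i : K} (hG : G.Good pos) (h : (G.forget i).Good pos) (v : V) (g : Option K) :
    (G.forget i).Nx pos v g ↔ ∃ g0, G.Nx pos v g0 ∧ (G.sum pos).NxF i g0 g := by
  have key : ∀ g0 g, G.Nx pos v g0 → (G.sum pos).NxF i g0 g → (G.forget i).Nx pos v g := by
    rintro g0 g hg0 (⟨hne, rfl⟩ | ⟨rfl, hS⟩)
    · rcases g with _ | c
      · exact fun c x hc => hg0 c x hc.2
      · obtain ⟨x, h1, h2, h3, h4⟩ := hg0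
        exact ⟨x, ⟨fun hc => hne (by rw [hc]), h1⟩, h2, h3, fun c' x' hc' => h4 c' x' hc'.2⟩
    · obtain ⟨x, h1, h2, h3, h4⟩ := hg0
      rcases g with _ | c
      · rintro c y ⟨hc, hy⟩ hyp
        have hyp' : G.proc y = G.proc v := hyp
        have := hS c (G.proc x) ⟨x, h1, rfl⟩ ⟨y, hy, by rw [hyp', h2]⟩
        rw [hG.lt_iff h1 hy] at this
        by_contra hcon
        have a := h4 _ _ hy hyp' (by omega)
        exact hc (hG.ch_inj _ _ _ hy (by rw [hG.inj y x (by omega)]; exact h1))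
      · obtain ⟨p, hp1, hp2, hlt, hnb⟩ := hS
        obtain ⟨y, hy, hyp⟩ := hp2
        rw [hG.pr_iff h1] at hp1
        rw [hG.lt_iff h1 hy] at hlt
        refine ⟨y, ⟨?_, hy⟩, ?_, by omega, ?_⟩
        · rintro rfl
          have := hG.ch_fun _ _ _ hy h1
          subst this
          omega
        · show G.proc y = G.proc v
          rw [hyp, ← h2, hp1]
        · rintro c' z ⟨hc', hz⟩ hzp hvz
          have hzp' : G.proc z = G.proc v := hzp
          have a := h4 _ _ hz hzp' hvz
          have b : pos z ≠ pos x := fun e => hc' (hG.ch_inj _ _ _ hz (by rw [hG.inj _ _ e]; exact h1))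
          have := hnb c' ⟨z, hz, by rw [hzp', ← h2, hp1]⟩ ((hG.lt_iff h1 hz).2 (by omega))
          rw [hG.lt_iff hz hy] at this
          omega
  constructor
  · intro hg
    obtain ⟨g0, hg0⟩ := G.Nx_ex pos v
    refine ⟨g0, hg0, ?_⟩
    by_cases hgi : g0 = some i
    · subst hgi
      right
      refine ⟨rfl, ?_⟩
      obtain ⟨x, h1, h2, h3, h4⟩ := hg0
      rcases g with _ | c
      · rintro c p ⟨x', hx', hxp'⟩ ⟨y, hy, hyp⟩ hlt
        have := hG.ch_fun _ _ _ hx' h1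
        subst x'
        rw [hG.lt_iff h1 hy] at hlt
        have hci : c ≠ i := by
          rintro rfl
          have := hG.ch_fun _ _ _ hy h1
          subst this
          omega
        have := hg c y ⟨hci, hy⟩ (show G.proc y = G.proc v by rw [hyp, ← h2, hxp'])
        omega
      · obtain ⟨y, ⟨hci, hy⟩, hyp, hvy, hmin⟩ := hg
        have hyp' : G.proc y = G.proc v := hyp
        refine ⟨G.proc v, ⟨x, h1, h2⟩, ⟨y, hy, hyp⟩, ?_, ?_⟩
        · rw [hG.lt_iff h1 hy]
          have a := h4 _ _ hy hyp' hvy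
          have b : pos y ≠ pos x := fun e => hci (hG.ch_inj _ _ _ hy (by rw [hG.inj _ _ e]; exact h1))
          omega
        · rintro c' ⟨z, hz, hzp⟩ hlt1 hlt2
          rw [hG.lt_iff h1 hz] at hlt1
          rw [hG.lt_iff hz hy] at hlt2
          have hci' : c' ≠ i := by
            rintro rfl
            have := hG.ch_fun _ _ _ hz h1
            subst this
            omega
          have := hmin c' z ⟨hci', hz⟩ hzp (by omega)
          omega
    · left
      exact ⟨hgi, h.Nx_uniq hg (key _ _ hg0 (Or.inl ⟨hgi, rfl⟩))⟩
  · rintro ⟨g0, hg0, hF⟩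
    exact key _ _ hg0 hF

theorem forget_sum {i : K} (hG : G.Good pos) (h : (G.forget i).Good pos) :
    (G.forget i).sum pos = (G.sum pos).forgetUpd i := by
  have hcol : ∀ x, ¬ (G.forget i).col x ↔ ¬ G.col x ∨ G.ch i x := by
    intro x
    constructor
    · intro hx
      by_cases hc : G.col x
      · right
        obtain ⟨c, hc⟩ := hc
        have : c = i := by
          by_contra hne; exact hx ⟨c, hne, hc⟩
        exact this ▸ hc
      · exact Or.inl hc
    · rintro (hx | hx)
      · exact forget_col hx
      · exact fun ⟨c, hc⟩ => hc.1 (hG.ch_inj _ _ _ hc.2 hx)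
  ext
  · simp only [sum, CSt.forgetUpd, forget]; grind
  · simp only [sum, CSt.forgetUpd, forget]; grind
  · simp only [sum, CSt.forgetUpd, forget]; grind
  · simp only [sum, CSt.forgetUpd, forget]; grind
  · simp only [sum, CSt.forgetUpd, forget]; grind
  · simp only [sum, CSt.forgetUpd, forget]; grind
  · simp only [sum, CSt.forgetUpd, forget]; grind
  · rename_i p
    constructor
    · rintro ⟨v, hv, hp, hm⟩
      rcases (hcol v).1 hv with hv | hv
      · exact Or.inl ⟨v, hv, hp, hm⟩
      · refine Or.inr ⟨⟨v, hv, hp⟩, ?_⟩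
        rintro ⟨u, w, hw, he⟩
        have := hG.ch_fun _ _ _ hw hv
        subst w
        have a := hG.edge_lt _ _ _ he
        have b := hm u (by rw [← hp]; exact hG.succ_proc _ _ he)
        omega
    · rintro (⟨v, hv, hp, hm⟩ | ⟨⟨v, hv, rfl⟩, hnp⟩)
      · exact ⟨v, (hcol v).2 (Or.inl hv), hp, hm⟩
      · have hvc := (hcol v).2 (Or.inr hv)
        rcases h.has_pred v hvc with ⟨u, hu⟩ | hm
        · exact (hnp ⟨u, v, hv, hu⟩).elim
        · exact ⟨v, hvc, rfl, hm⟩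
  · rename_i p
    constructor
    · rintro ⟨v, hv, hp, hm⟩
      rcases (hcol v).1 hv with hv | hv
      · exact Or.inl ⟨v, hv, hp, hm⟩
      · refine Or.inr ⟨⟨v, hv, hp⟩, ?_⟩
        rintro ⟨u, w, hw, he⟩
        have := hG.ch_fun _ _ _ hw hv
        subst u
        have a := hG.edge_lt _ _ _ he
        have b := hm w (by rw [← hp]; exact (hG.succ_proc _ _ he).symm)
        omega
    · rintro (⟨v, hv, hp, hm⟩ | ⟨⟨v, hv, rfl⟩, hnp⟩)
      · exact ⟨v, (hcol v).2 (Or.inl hv), hp, hm⟩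
      · have hvc := (hcol v).2 (Or.inr hv)
        rcases h.has_succ v hvc with ⟨u, hu⟩ | hm
        · exact (hnp ⟨v, u, hv, hu⟩).elim
        · exact ⟨v, hvc, rfl, hm⟩
  · rename_i d g g'
    constructor
    · rintro ⟨e, f, he, hg, hf⟩
      rw [forget_Nx hG h] at hg hf
      obtain ⟨g0, hg0, hF⟩ := hg
      obtain ⟨g0', hg0', hF'⟩ := hf
      exact ⟨g0, g0', ⟨e, f, he, hg0, hg0'⟩, hF, hF'⟩
    · rintro ⟨g0, g0', ⟨e, f, he, hg0, hg0'⟩, hF, hF'⟩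
      exact ⟨e, f, he, (forget_Nx hG h _ _).2 ⟨g0, hg0, hF⟩, (forget_Nx hG h _ _).2 ⟨g0', hg0', hF'⟩⟩

end CG

namespace CSt

variable {A : Architecture} {K : Type}

structure PlusOk (s : Bool → CSt A K) (lt : K → K → Prop) : Prop where
  dj : ∀ b b' c, (s b).act c → (s b').act c → b = b'
  irr : ∀ c, ¬ lt c c
  tr : ∀ c c' c'', lt c c' → lt c' c'' → lt c c''
  tot : ∀ b b' c c', (s b).act c → (s b').act c' → c ≠ c' → lt c c' ∨ lt c' c
  lact : ∀ c c', lt c c' → (∃ b, (s b).act c) ∧ ∃ b, (s b).act c'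
  res : ∀ b c c', (s b).act c → (s b).act c' → ((s b).lt c c' ↔ lt c c')
  ok_min : ∀ b b', b ≠ b' → ∀ p, (s b).fmin p →
    ¬ (s b').fmin p ∧ ∀ j, (s b').pr j p → ∃ i, (s b).pr i p ∧ lt i j
  ok_max : ∀ b b', b ≠ b' → ∀ p, (s b).fmax p →
    ¬ (s b').fmax p ∧ ∀ j, (s b').pr j p → ∃ i, (s b).pr i p ∧ lt j i
  ok_hs : ∀ b b', b ≠ b' → ∀ p i j, (s b).hs i → (s b).pr i p → (s b').pr j p → lt i j →
    ∃ i', (s b).pr i' p ∧ lt i i' ∧ lt i' j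
  ok_q : ∀ b b', b ≠ b' → ∀ d, A.kind d = DSKind.queue → ∀ g h g' h', (s b).S d g h →
    (s b').S d g' h' → ltO lt g g' → ltO lt h' h → False
  ok_s : ∀ b b', b ≠ b' → ∀ d, A.kind d = DSKind.stack → ∀ g h g' h', (s b).S d g h →
    (s b').S d g' h' → ltO lt g g' → ltO lt g' h → ltO lt h h' → False

def plusUpd (s : Bool → CSt A K) (lt : K → K → Prop) : CSt A K where
  pr c p := ∃ b, (s b).pr c p
  lt := lt
  succ c c' := ∃ b, (s b).succ c c'
  hp c := ∃ b, (s b).hp c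
  hs c := ∃ b, (s b).hs c
  mat d c c' := ∃ b, (s b).mat d c c'
  tch c := ∃ b, (s b).tch c
  fmin p := ∃ b, (s b).fmin p
  fmax p := ∃ b, (s b).fmax p
  S d g h := ∃ b, (s b).S d g h

end CSt

namespace CG

variable {A : Architecture} {K : Type} {V : Bool → Type}

inductive PlusEdge (G : ∀ b, CG A K (V b)) (γ : Option A.DS) :
    (Σ b, V b) → (Σ b, V b) → Prop
  | mk (b : Bool) (u v : V b) : (G b).edge γ u v → PlusEdge G γ ⟨b, u⟩ ⟨b, v⟩

def plus (G : ∀ b, CG A K (V b)) : CG A K (Σ b, V b) where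
  proc x := (G x.1).proc x.2
  edge := PlusEdge G
  ch c x := (G x.1).ch c x.2

variable {G : ∀ b, CG A K (V b)} {pos : (Σ b, V b) → ℕ}

theorem plus_edge {γ : Option A.DS} {b : Bool} {u v : V b} :
    (plus G).edge γ ⟨b, u⟩ ⟨b, v⟩ ↔ (G b).edge γ u v :=
  ⟨fun h => by cases h; assumption, fun h => .mk _ _ _ h⟩

theorem plus_good_of (h : (plus G).Good pos) (b : Bool) : (G b).Good (fun v => pos ⟨b, v⟩) where
  inj u v e := by
    have := h.inj _ _ e
    simpa using this
  ch_fun c u v hu hv := by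
    have := h.ch_fun c ⟨b, u⟩ ⟨b, v⟩ hu hv
    simpa using this
  ch_inj c c' u hu hv := h.ch_inj c c' ⟨b, u⟩ hu hv
  edge_lt _ _ _ e := h.edge_lt _ _ _ (plus_edge.2 e)
  succ_proc _ _ e := h.succ_proc _ _ (plus_edge.2 e)
  succ_cont u v w e := h.succ_cont _ _ ⟨b, w⟩ (plus_edge.2 e)
  has_pred v hv := by
    rcases h.has_pred ⟨b, v⟩ hv with ⟨u, hu⟩ | h'
    · cases hu with | mk _ u _ hu => exact Or.inl ⟨u, hu⟩
    · exact Or.inr fun w hw => h' ⟨b, w⟩ hw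
  has_succ v hv := by
    rcases h.has_succ ⟨b, v⟩ hv with ⟨u, hu⟩ | h'
    · cases hu with | mk _ _ u hu => exact Or.inl ⟨u, hu⟩
    · exact Or.inr fun w hw => h' ⟨b, w⟩ hw
  wr _ _ _ e := h.wr _ _ _ (plus_edge.2 e)
  disj d d' u v u' v' e e' hor := by
    have := h.disj _ _ _ _ _ _ (plus_edge.2 e) (plus_edge.2 e') (by simpa using hor)
    simpa using this
  lifo d hd _ _ _ _ e e' := h.lifo d hd _ _ _ _ (plus_edge.2 e) (plus_edge.2 e')
  fifo d hd _ _ _ _ e e' := h.fifo d hd _ _ _ _ (plus_edge.2 e) (plus_edge.2 e')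

theorem pos_ne (hinj : ∀ x y, pos x = pos y → x = y) {b b' : Bool} (hb : b ≠ b') (x : V b)
    (y : V b') : pos ⟨b, x⟩ ≠ pos ⟨b', y⟩ :=
  fun h => hb (congrArg Sigma.fst (hinj _ _ h))

theorem lemB (h : (plus G).Good pos) {b b' : Bool} (hb : b ≠ b') {x : V b} {y : V b'}
    (hp : (G b).proc x = (G b').proc y) (hlt : pos ⟨b, x⟩ < pos ⟨b', y⟩) :
    ∃ c u, (G b).ch c u ∧ (G b).proc u = (G b).proc x ∧ pos ⟨b, x⟩ ≤ pos ⟨b, u⟩ ∧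
      pos ⟨b, u⟩ < pos ⟨b', y⟩ := by
  obtain ⟨u, ⟨h1, h2, h3⟩, h4⟩ := ex_max (fun v => pos ⟨b, v⟩)
    (fun w => (G b).proc w = (G b).proc x ∧ pos ⟨b, x⟩ ≤ pos ⟨b, w⟩ ∧ pos ⟨b, w⟩ < pos ⟨b', y⟩)
    (pos ⟨b', y⟩) (fun v hv => hv.2.2.le) ⟨x, rfl, le_rfl, hlt⟩
  by_cases hu : (G b).col u
  · obtain ⟨c, hc⟩ := hu
    exact ⟨c, u, hc, h1, h2, h3⟩
  · exfalso
    rcases h.has_succ ⟨b, u⟩ hu with ⟨z, hz⟩ | hm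
    · cases hz with
      | mk _ _ z hz =>
      have a1 := h.edge_lt _ _ _ (plus_edge.2 hz)
      have a2 : (G b).proc u = (G b).proc z := h.succ_proc _ _ (plus_edge.2 hz)
      have a3 := pos_ne h.inj hb z y
      by_cases hlt' : pos ⟨b, z⟩ < pos ⟨b', y⟩
      · have := h4 z ⟨by rw [← a2, h1], by omega, hlt'⟩
        omega
      · exact h.succ_cont _ _ ⟨b', y⟩ (plus_edge.2 hz) (by simp only [plus]; rw [← hp, h1]) h3 (by omega)
    · have := hm ⟨b', y⟩ (by simp only [plus]; rw [← hp, h1])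
      omega

theorem lemB' (h : (plus G).Good pos) {b b' : Bool} (hb : b ≠ b') {x : V b} {y : V b'}
    (hp : (G b).proc x = (G b').proc y) (hlt : pos ⟨b', y⟩ < pos ⟨b, x⟩) :
    ∃ c u, (G b).ch c u ∧ (G b).proc u = (G b).proc x ∧ pos ⟨b, u⟩ ≤ pos ⟨b, x⟩ ∧
      pos ⟨b', y⟩ < pos ⟨b, u⟩ := by
  obtain ⟨u, ⟨h1, h2, h3⟩, h4⟩ := ex_min (fun v => pos ⟨b, v⟩)
    (fun w => (G b).proc w = (G b).proc x ∧ pos ⟨b, w⟩ ≤ pos ⟨b, x⟩ ∧ pos ⟨b', y⟩ < pos ⟨b, w⟩)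
    ⟨x, rfl, le_rfl, hlt⟩
  by_cases hu : (G b).col u
  · obtain ⟨c, hc⟩ := hu
    exact ⟨c, u, hc, h1, h2, h3⟩
  · exfalso
    rcases h.has_pred ⟨b, u⟩ hu with ⟨z, hz⟩ | hm
    · cases hz with
      | mk _ z _ hz =>
      have a1 := h.edge_lt _ _ _ (plus_edge.2 hz)
      have a2 : (G b).proc z = (G b).proc u := h.succ_proc _ _ (plus_edge.2 hz)
      have a3 := pos_ne h.inj hb z y
      by_cases hlt' : pos ⟨b', y⟩ < pos ⟨b, z⟩
      · have := h4 z ⟨by rw [a2, h1], by omega, hlt'⟩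
        omega
      · exact h.succ_cont _ _ ⟨b', y⟩ (plus_edge.2 hz) (by simp only [plus]; rw [← hp, a2, h1])
          (by omega) h3
    · have := hm ⟨b', y⟩ (by simp only [plus]; rw [← hp, h1])
      omega

theorem plus_Nx_of (h : (plus G).Good pos) {b : Bool} {v : V b} {o : Option K}
    (ho : (G b).Nx (fun v => pos ⟨b, v⟩) v o) : (plus G).Nx pos ⟨b, v⟩ o := by
  rcases o with _ | c
  · rintro c ⟨b', y⟩ hc hp
    by_cases hb : b = b'
    · subst hb; exact ho c y hc hp
    · by_contra hcon
      have := pos_ne h.inj hb v y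
      obtain ⟨c', u, hu, h1, h2, h3⟩ := lemB h hb (x := v) (y := y) hp.symm (by omega)
      have := ho _ _ hu h1
      simp only at this
      omega
  · obtain ⟨x, h1, h2, h3, h4⟩ := ho
    refine ⟨⟨b, x⟩, h1, h2, h3, ?_⟩
    rintro c' ⟨b', y⟩ hc hp hvy
    by_cases hb : b = b'
    · subst hb; exact h4 c' y hc hp hvy
    · have := pos_ne h.inj hb v y
      obtain ⟨c', u, hu, h1, h2, h3⟩ := lemB h hb (x := v) (y := y) hp.symm (by omega)
      have := h4 _ _ hu h1 h2
      simp only at this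
      omega

theorem plus_Nx (h : (plus G).Good pos) {b : Bool} {v : V b} {o : Option K} :
    (plus G).Nx pos ⟨b, v⟩ o ↔ (G b).Nx (fun v => pos ⟨b, v⟩) v o := by
  refine ⟨fun ho => ?_, plus_Nx_of h⟩
  obtain ⟨o', ho'⟩ := (G b).Nx_ex (fun v => pos ⟨b, v⟩) v
  rw [h.Nx_uniq ho (plus_Nx_of h ho')]
  exact ho'

theorem Good.Nx_mono {V : Type} {G : CG A K V} {pos : V → ℕ} (hG : G.Good pos) {x y : V}
    {o o' : Option K} (hp : G.proc x = G.proc y) (ho : G.Nx pos x o) (ho' : G.Nx pos y o')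
    (hlt : ltO (G.sum pos).lt o o') : pos x < pos y := by
  rcases o with _ | c
  · exact hlt.elim
  · obtain ⟨z, h1, h2, h3, h4⟩ := ho
    rw [hG.Nx_cmp h1 (h2.trans hp) ho'] at hlt
    omega

theorem plus_sum (h : (plus G).Good pos) : (plus G).sum pos =
    CSt.plusUpd (fun b => (G b).sum (fun v => pos ⟨b, v⟩)) ((plus G).sum pos).lt := by
  ext
  · constructor
    · rintro ⟨⟨b, v⟩, h1, h2⟩; exact ⟨b, v, h1, h2⟩
    · rintro ⟨b, v, h1, h2⟩; exact ⟨⟨b, v⟩, h1, h2⟩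
  · rfl
  · constructor
    · rintro ⟨_, _, h1, h2, ⟨b, u, v, he⟩⟩; exact ⟨b, u, v, h1, h2, he⟩
    · rintro ⟨b, u, v, h1, h2, he⟩; exact ⟨⟨b, u⟩, ⟨b, v⟩, h1, h2, plus_edge.2 he⟩
  · constructor
    · rintro ⟨_, _, h1, ⟨b, u, v, he⟩⟩; exact ⟨b, u, v, h1, he⟩
    · rintro ⟨b, u, v, h1, he⟩; exact ⟨⟨b, u⟩, ⟨b, v⟩, h1, plus_edge.2 he⟩
  · constructor
    · rintro ⟨_, _, h1, ⟨b, u, v, he⟩⟩; exact ⟨b, u, v, h1, he⟩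
    · rintro ⟨b, u, v, h1, he⟩; exact ⟨⟨b, u⟩, ⟨b, v⟩, h1, plus_edge.2 he⟩
  · constructor
    · rintro ⟨_, _, h1, h2, ⟨b, u, v, he⟩⟩; exact ⟨b, u, v, h1, h2, he⟩
    · rintro ⟨b, u, v, h1, h2, he⟩; exact ⟨⟨b, u⟩, ⟨b, v⟩, h1, h2, plus_edge.2 he⟩
  · constructor
    · rintro ⟨d, _, _, h1, ⟨b, u, v, he⟩⟩; exact ⟨b, d, u, v, h1, he⟩
    · rintro ⟨b, d, u, v, h1, he⟩; exact ⟨d, ⟨b, u⟩, ⟨b, v⟩, h1, plus_edge.2 he⟩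
  · constructor
    · rintro ⟨⟨b, v⟩, h1, h2, h3⟩
      exact ⟨b, v, h1, h2, fun w hw => h3 ⟨b, w⟩ hw⟩
    · rintro ⟨b, v, h1, rfl, h3⟩
      refine ⟨⟨b, v⟩, h1, rfl, ?_⟩
      rcases h.has_pred ⟨b, v⟩ h1 with ⟨u, hu⟩ | hm
      · exfalso
        cases hu with
        | mk _ u _ hu =>
        have a := h.edge_lt _ _ _ (plus_edge.2 hu)
        have c := h3 u (h.succ_proc _ _ (plus_edge.2 hu))
        simp only at c
        omega
      · exact hm
  · constructor
    · rintro ⟨⟨b, v⟩, h1, h2, h3⟩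
      exact ⟨b, v, h1, h2, fun w hw => h3 ⟨b, w⟩ hw⟩
    · rintro ⟨b, v, h1, rfl, h3⟩
      refine ⟨⟨b, v⟩, h1, rfl, ?_⟩
      rcases h.has_succ ⟨b, v⟩ h1 with ⟨u, hu⟩ | hm
      · exfalso
        cases hu with
        | mk _ _ u hu =>
        have a := h.edge_lt _ _ _ (plus_edge.2 hu)
        have c := h3 u (h.succ_proc _ _ (plus_edge.2 hu)).symm
        simp only at c
        omega
      · exact hm
  · constructor
    · rintro ⟨_, _, ⟨b, u, v, he⟩, h1, h2⟩
      exact ⟨b, u, v, he, (plus_Nx h).1 h1, (plus_Nx h).1 h2⟩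
    · rintro ⟨b, u, v, he, h1, h2⟩
      exact ⟨⟨b, u⟩, ⟨b, v⟩, plus_edge.2 he, (plus_Nx h).2 h1, (plus_Nx h).2 h2⟩

theorem plus_ok_of (h : (plus G).Good pos) :
    CSt.PlusOk (fun b => (G b).sum (fun v => pos ⟨b, v⟩)) ((plus G).sum pos).lt := by
  have hb := plus_good_of h
  have hmin : ∀ b p, ((G b).sum (fun v => pos ⟨b, v⟩)).fmin p → ∃ v, (G b).proc v = p ∧
      ∀ x, (plus G).proc x = p → pos ⟨b, v⟩ ≤ pos x := by
    rintro b p ⟨v, h1, rfl, h2⟩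
    refine ⟨v, rfl, ?_⟩
    rcases h.has_pred ⟨b, v⟩ h1 with ⟨u, hu⟩ | hm
    · exfalso
      cases hu with
      | mk _ u _ hu =>
      have a := h.edge_lt _ _ _ (plus_edge.2 hu)
      have c := h2 u (h.succ_proc _ _ (plus_edge.2 hu))
      simp only at c
      omega
    · exact hm
  have hmax : ∀ b p, ((G b).sum (fun v => pos ⟨b, v⟩)).fmax p → ∃ v, (G b).proc v = p ∧
      ∀ x, (plus G).proc x = p → pos x ≤ pos ⟨b, v⟩ := by
    rintro b p ⟨v, h1, rfl, h2⟩
    refine ⟨v, rfl, ?_⟩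
    rcases h.has_succ ⟨b, v⟩ h1 with ⟨u, hu⟩ | hm
    · exfalso
      cases hu with
      | mk _ _ u hu =>
      have a := h.edge_lt _ _ _ (plus_edge.2 hu)
      have c := h2 u (h.succ_proc _ _ (plus_edge.2 hu)).symm
      simp only at c
      omega
    · exact hm
  constructor
  · rintro b b' c ⟨p, x, hx, -⟩ ⟨p', y, hy, -⟩
    exact congrArg Sigma.fst (h.ch_fun c ⟨b, x⟩ ⟨b', y⟩ hx hy)
  · rintro c ⟨x, y, hx, hy, hlt⟩
    have := h.ch_fun _ _ _ hx hy
    subst this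
    omega
  · rintro c c' c'' ⟨x, y, hx, hy, hlt⟩ ⟨x', y', hx', hy', hlt'⟩
    have := h.ch_fun _ _ _ hx' hy
    subst this
    exact ⟨x, y', hx, hy', by omega⟩
  · rintro b b' c c' ⟨p, x, hx, -⟩ ⟨p', y, hy, -⟩ hne
    rcases lt_trichotomy (pos ⟨b, x⟩) (pos ⟨b', y⟩) with h1 | h1 | h1
    · exact Or.inl ⟨⟨b, x⟩, ⟨b', y⟩, hx, hy, h1⟩
    · have := h.inj _ _ h1
      exact (hne (h.ch_inj c c' ⟨b, x⟩ hx (by rw [this]; exact hy))).elim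
    · exact Or.inr ⟨⟨b', y⟩, ⟨b, x⟩, hy, hx, h1⟩
  · rintro c c' ⟨⟨b, x⟩, ⟨b', y⟩, hx, hy, hlt⟩
    exact ⟨⟨b, _, x, hx, rfl⟩, ⟨b', _, y, hy, rfl⟩⟩
  · rintro b c c' ⟨p, x, hx, -⟩ ⟨p', y, hy, -⟩
    rw [(hb b).lt_iff hx hy, h.lt_iff (i := c) (j := c') (x := ⟨b, x⟩) (y := ⟨b, y⟩) hx hy]
  · intro b b' hbb p hm
    obtain ⟨v, hv, hm⟩ := hmin b p hm
    constructor
    · intro hm'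
      obtain ⟨v', hv', hm'⟩ := hmin b' p hm'
      have a1 := hm ⟨b', v'⟩ hv'
      have a2 := hm' ⟨b, v⟩ hv
      exact pos_ne h.inj hbb v v' (by omega)
    · rintro j ⟨y, hy, hyp⟩
      have a1 := hm ⟨b', y⟩ hyp
      have a2 := pos_ne h.inj hbb v y
      obtain ⟨c, u, hu, h1, h2, h3⟩ := lemB h hbb (x := v) (y := y) (hv.trans hyp.symm) (by omega)
      exact ⟨c, ⟨u, hu, h1.trans hv⟩, ⟨b, u⟩, ⟨b', y⟩, hu, hy, h3⟩
  · intro b b' hbb p hm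
    obtain ⟨v, hv, hm⟩ := hmax b p hm
    constructor
    · intro hm'
      obtain ⟨v', hv', hm'⟩ := hmax b' p hm'
      have a1 := hm ⟨b', v'⟩ hv'
      have a2 := hm' ⟨b, v⟩ hv
      exact pos_ne h.inj hbb v v' (by omega)
    · rintro j ⟨y, hy, hyp⟩
      have a1 := hm ⟨b', y⟩ hyp
      have a2 := pos_ne h.inj hbb v y
      obtain ⟨c, u, hu, h1, h2, h3⟩ := lemB' h hbb (x := v) (y := y) (hv.trans hyp.symm) (by omega)
      exact ⟨c, ⟨u, hu, h1.trans hv⟩, ⟨b', y⟩, ⟨b, u⟩, hy, hu, h3⟩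
  · rintro b b' hbb p i j ⟨x, z, hx, hz⟩ hpr ⟨y, hy, hyp⟩ hlt
    have hpx := ((hb b).pr_iff hx p).1 hpr
    rw [h.lt_iff (i := i) (j := j) (x := ⟨b, x⟩) (y := ⟨b', y⟩) hx hy] at hlt
    have a1 : (G b).proc x = (G b).proc z := h.succ_proc _ _ (plus_edge.2 hz)
    have a2 := pos_ne h.inj hbb z y
    have a3 := h.edge_lt _ _ _ (plus_edge.2 hz)
    have a4 : ¬ pos ⟨b', y⟩ < pos ⟨b, z⟩ := fun hh =>
      h.succ_cont _ _ ⟨b', y⟩ (plus_edge.2 hz) (show (G b').proc y = (G b).proc x by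
        rw [hyp, hpx]) hlt hh
    obtain ⟨c, u, hu, h1, h2, h3⟩ := lemB h hbb (x := z) (y := y)
      (by rw [← a1, hpx, hyp]) (by omega)
    refine ⟨c, ⟨u, hu, by rw [h1, ← a1, hpx]⟩, ⟨⟨b, x⟩, ⟨b, u⟩, hx, hu, by omega⟩,
      ⟨⟨b, u⟩, ⟨b', y⟩, hu, hy, h3⟩⟩
  · rintro b b' hbb d hd g g1 g' g1' ⟨e, f, he, h1, h2⟩ ⟨e', f', he', h1', h2'⟩ hl hl'
    have w := (hb b).wr _ _ _ he
    have w' := (hb b').wr _ _ _ he'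
    have a := h.Nx_mono (x := ⟨b, e⟩) (y := ⟨b', e'⟩) (w.1.trans w'.1.symm)
      (plus_Nx_of h h1) (plus_Nx_of h h1') hl
    have a' := h.Nx_mono (x := ⟨b', f'⟩) (y := ⟨b, f⟩) (w'.2.trans w.2.symm)
      (plus_Nx_of h h2') (plus_Nx_of h h2) hl'
    have := h.fifo d hd _ _ _ _ (plus_edge.2 he) (plus_edge.2 he') a
    omega
  · rintro b b' hbb d hd g g1 g' g1' ⟨e, f, he, h1, h2⟩ ⟨e', f', he', h1', h2'⟩ hl hl' hl''
    have w := (hb b).wr _ _ _ he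
    have w' := (hb b').wr _ _ _ he'
    have ws := A.stack_wr d hd
    have a := h.Nx_mono (x := ⟨b, e⟩) (y := ⟨b', e'⟩) (w.1.trans w'.1.symm)
      (plus_Nx_of h h1) (plus_Nx_of h h1') hl
    have a' := h.Nx_mono (x := ⟨b', e'⟩) (y := ⟨b, f⟩)
      (show (G b').proc e' = (G b).proc f by rw [w'.1, w.2, ws])
      (plus_Nx_of h h1') (plus_Nx_of h h2) hl'
    have a'' := h.Nx_mono (x := ⟨b, f⟩) (y := ⟨b', f'⟩) (w.2.trans w'.2.symm)
      (plus_Nx_of h h2) (plus_Nx_of h h2') hl''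
    have := h.lifo d hd _ _ _ _ (plus_edge.2 he) (plus_edge.2 he') a a'
    omega

end CG

namespace CG

variable {A : Architecture} {K : Type}

section congr

variable {V : Type} {G : CG A K V} {pos pos' : V → ℕ}

theorem Nx_congr (hpp : ∀ u v, pos u < pos v ↔ pos' u < pos' v) {v : V} {o : Option K}
    (h : G.Nx pos v o) : G.Nx pos' v o := by
  have hle : ∀ u v, pos u ≤ pos v ↔ pos' u ≤ pos' v := fun u v => by
    have := hpp v u; omega
  rcases o with _ | c
  · intro c x h1 h2
    exact (hpp _ _).1 (h c x h1 h2)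
  · obtain ⟨x, h1, h2, h3, h4⟩ := h
    exact ⟨x, h1, h2, (hle _ _).1 h3, fun c' x' a b d => (hle _ _).1 (h4 c' x' a b ((hle _ _).2 d))⟩

theorem Good.congr (hpp : ∀ u v, pos u < pos v ↔ pos' u < pos' v) (h : G.Good pos) :
    G.Good pos' := by
  have hle : ∀ u v, pos u ≤ pos v ↔ pos' u ≤ pos' v := fun u v => by
    have := hpp v u; omega
  refine ⟨?_, h.ch_fun, h.ch_inj, ?_, h.succ_proc, ?_, ?_, ?_, h.wr, h.disj, ?_, ?_⟩
  · intro u v e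
    apply h.inj
    have := hpp u v
    have := hpp v u
    omega
  · intro γ u v e
    exact (hpp _ _).1 (h.edge_lt γ u v e)
  · intro u v w e hw h1 h2
    exact h.succ_cont u v w e hw ((hpp _ _).2 h1) ((hpp _ _).2 h2)
  · intro v hv
    rcases h.has_pred v hv with h1 | h1
    · exact Or.inl h1
    · exact Or.inr fun w hw => (hle _ _).1 (h1 w hw)
  · intro v hv
    rcases h.has_succ v hv with h1 | h1
    · exact Or.inl h1
    · exact Or.inr fun w hw => (hle _ _).1 (h1 w hw)
  · intro d hd e f e' f' h1 h2 h3 h4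
    exact (hpp _ _).1 (h.lifo d hd e f e' f' h1 h2 ((hpp _ _).2 h3) ((hpp _ _).2 h4))
  · intro d hd e f e' f' h1 h2 h3
    exact (hpp _ _).1 (h.fifo d hd e f e' f' h1 h2 ((hpp _ _).2 h3))

theorem sum_congr (hpp : ∀ u v, pos u < pos v ↔ pos' u < pos' v) : G.sum pos = G.sum pos' := by
  have hle : ∀ u v, pos u ≤ pos v ↔ pos' u ≤ pos' v := fun u v => by
    have := hpp v u; omega
  have hN : ∀ v o, G.Nx pos v o ↔ G.Nx pos' v o := fun v o =>
    ⟨Nx_congr hpp, Nx_congr fun u v => (hpp u v).symm⟩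
  simp only [sum, hpp, hle, hN]

end congr

variable {V : Bool → Type} {G : ∀ b, CG A K (V b)} {pos : (Σ b, V b) → ℕ}

theorem plus_good1 [∀ b, Finite (V b)] (hinj : ∀ x y, pos x = pos y → x = y)
    (hg : ∀ b, (G b).Good (fun v => pos ⟨b, v⟩)) {lt : K → K → Prop}
    (hok : CSt.PlusOk (fun b => (G b).sum (fun v => pos ⟨b, v⟩)) lt)
    (hlt : ∀ b b' c c' x y, (G b).ch c x → (G b').ch c' y →
      (lt c c' ↔ pos ⟨b, x⟩ < pos ⟨b', y⟩)) : (plus G).Good pos := by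
  -- the minimum on the other side
  have hmin : ∀ b b', b ≠ b' → ∀ v : V b, ¬ (G b).col v →
      (∀ w, (G b).proc w = (G b).proc v → pos ⟨b, v⟩ ≤ pos ⟨b, w⟩) →
      ∀ w : V b', (G b').proc w = (G b).proc v → pos ⟨b, v⟩ < pos ⟨b', w⟩ := by
    intro b b' hb v hv hm w hw
    obtain ⟨n1, n2⟩ := hok.ok_min b b' hb _ ⟨v, hv, rfl, hm⟩
    obtain ⟨m, hm1, hm2⟩ := ex_min (fun v => pos ⟨b', v⟩)
      (fun w => (G b').proc w = (G b).proc v) ⟨w, hw⟩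
    by_cases hc : (G b').col m
    · obtain ⟨j, hj⟩ := hc
      obtain ⟨i, ⟨x, hx, hxp⟩, hij⟩ := n2 j ⟨m, hj, hm1⟩
      rw [hlt b b' i j x m hx hj] at hij
      have a1 := hm x hxp
      have a2 := hm2 w hw
      omega
    · exact (n1 ⟨m, hc, hm1, hm2⟩).elim
  have hmax : ∀ b b', b ≠ b' → ∀ v : V b, ¬ (G b).col v →
      (∀ w, (G b).proc w = (G b).proc v → pos ⟨b, w⟩ ≤ pos ⟨b, v⟩) →
      ∀ w : V b', (G b').proc w = (G b).proc v → pos ⟨b', w⟩ < pos ⟨b, v⟩ := by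
    intro b b' hb v hv hm w hw
    obtain ⟨n1, n2⟩ := hok.ok_max b b' hb _ ⟨v, hv, rfl, hm⟩
    obtain ⟨m, hm1, hm2⟩ := ex_max_fin (fun v => pos ⟨b', v⟩)
      (fun w => (G b').proc w = (G b).proc v) ⟨w, hw⟩
    by_cases hc : (G b').col m
    · obtain ⟨j, hj⟩ := hc
      obtain ⟨i, ⟨x, hx, hxp⟩, hij⟩ := n2 j ⟨m, hj, hm1⟩
      rw [hlt b' b j i m x hj hx] at hij
      have a1 := hm x hxp
      have a2 := hm2 w hw
      omega
    · exact (n1 ⟨m, hc, hm1, hm2⟩).elim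
  -- a vertex of the other side located strictly below a colored vertex
  have hcross : ∀ b b', b ≠ b' → ∀ (x : V b) (y : V b') i o', (G b).proc x = (G b').proc y →
      (G b).ch i x → (G b').Nx (fun v => pos ⟨b', v⟩) y o' → ltO lt (some i) o' →
      pos ⟨b, x⟩ < pos ⟨b', y⟩ := by
    intro b b' hb x y i o' hp hx hy hl
    by_contra hcon
    have hne := pos_ne hinj hb x y
    rcases o' with _ | j
    · obtain ⟨m, ⟨hm1, hm3⟩, hm2⟩ := ex_max_fin (fun v => pos ⟨b', v⟩)
        (fun w => (G b').proc w = (G b').proc y ∧ pos ⟨b', y⟩ ≤ pos ⟨b', w⟩) ⟨y, rfl, le_rfl⟩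
      have hc : ¬ (G b').col m := by
        rintro ⟨c, hc⟩
        have := hy c m hc hm1
        simp only at this
        omega
      have hm4 : ∀ w, (G b').proc w = (G b').proc m → pos ⟨b', w⟩ ≤ pos ⟨b', m⟩ := by
        intro w hw
        by_cases h : pos ⟨b', y⟩ ≤ pos ⟨b', w⟩
        · exact hm2 w ⟨hw.trans hm1, h⟩
        · omega
      obtain ⟨n1, n2⟩ := hok.ok_max b' b hb.symm _ ⟨m, hc, rfl, hm4⟩
      obtain ⟨j, ⟨z, hz, hzp⟩, hij⟩ := n2 i ⟨x, hx, by rw [hp, hm1]⟩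
      rw [hlt b b' i j x z hx hz] at hij
      have := hy j z hz (hzp.trans hm1)
      simp only at this
      omega
    · obtain ⟨z, hz, hzp, hz1, hz2⟩ := hy
      simp only at hz1 hz2
      have hl' := (hlt b b' i j x z hx hz).1 hl
      by_cases hex : ∃ u, (G b').col u ∧ (G b').proc u = (G b').proc y ∧ pos ⟨b', u⟩ ≤ pos ⟨b', y⟩
      · obtain ⟨l, ⟨⟨c, hc⟩, hl1, hl2⟩, hl3⟩ := ex_max_fin (fun v => pos ⟨b', v⟩) _ hex
        have hly : pos ⟨b', l⟩ < pos ⟨b', y⟩ := by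
          rcases hl2.lt_or_eq with h | h
          · exact h
          · exfalso
            have := hz2 c l hc hl1 h.ge
            omega
        obtain ⟨u, hu⟩ := (hg b').lemA' (v := l) (x := y) hl1 hly (by
          intro c' w h1 h2 h3 h4
          have := hl3 w ⟨⟨c', h1⟩, h2, h4⟩
          omega)
        obtain ⟨c', ⟨w, hw, hwp⟩, h1, h2⟩ := hok.ok_hs b' b hb.symm ((G b').proc y) c i
          ⟨l, u, hc, hu⟩ ⟨l, hc, hl1⟩ ⟨x, hx, hp⟩ ((hlt b' b c i l x hc hx).2 (by omega))
        rw [hlt b' b' c c' l w hc hw] at h1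
        rw [hlt b' b c' i w x hw hx] at h2
        by_cases h3 : pos ⟨b', w⟩ ≤ pos ⟨b', y⟩
        · have := hl3 w ⟨⟨c', hw⟩, hwp, h3⟩
          omega
        · have := hz2 c' w hw hwp (by omega)
          omega
      · obtain ⟨m, hm1, hm2⟩ := ex_min (fun v => pos ⟨b', v⟩)
          (fun w => (G b').proc w = (G b').proc y) ⟨y, rfl⟩
        have hmy := hm2 y rfl
        have hc : ¬ (G b').col m := fun hc => hex ⟨m, hc, hm1, hmy⟩
        obtain ⟨n1, n2⟩ := hok.ok_min b' b hb.symm _ ⟨m, hc, hm1, hm2⟩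
        obtain ⟨j', ⟨w, hw, hwp⟩, hij⟩ := n2 i ⟨x, hx, hp⟩
        rw [hlt b' b j' i w x hw hx] at hij
        by_cases h3 : pos ⟨b', w⟩ ≤ pos ⟨b', y⟩
        · exact hex ⟨w, ⟨j', hw⟩, hwp, h3⟩
        · have := hz2 j' w hw hwp (by omega)
          omega
  have hcross' : ∀ b b', b ≠ b' → ∀ (x : V b) (y : V b') o o', (G b).proc x = (G b').proc y →
      (G b).Nx (fun v => pos ⟨b, v⟩) x o → (G b').Nx (fun v => pos ⟨b', v⟩) y o' → ltO lt o o' →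
      pos ⟨b, x⟩ < pos ⟨b', y⟩ := by
    intro b b' hb x y o o' hp hx hy hl
    rcases o with _ | i
    · exact hl.elim
    · obtain ⟨u, h1, h2, h3, h4⟩ := hx
      have := hcross b b' hb u y i o' (h2.trans hp) h1 hy hl
      simp only at h3
      omega
  have htot : ∀ b b', b ≠ b' → ∀ (x : V b) (y : V b') o o', (G b).proc x = (G b').proc y →
      (G b).Nx (fun v => pos ⟨b, v⟩) x o → (G b').Nx (fun v => pos ⟨b', v⟩) y o' →
      ltO lt o o' ∨ ltO lt o' o := by
    intro b b' hb x y o o' hp hx hy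
    rcases o with _ | i <;> rcases o' with _ | j
    · exfalso
      have key : ∀ b (x : V b), (G b).Nx (fun v => pos ⟨b, v⟩) x none →
          ((G b).sum (fun v => pos ⟨b, v⟩)).fmax ((G b).proc x) := by
        intro b x hx
        obtain ⟨m, hm1, hm2⟩ := ex_max_fin (fun v => pos ⟨b, v⟩)
          (fun w => (G b).proc w = (G b).proc x) ⟨x, rfl⟩
        refine ⟨m, ?_, hm1, hm2⟩
        rintro ⟨c, hc⟩
        have q := hx c m hc hm1
        simp only at q
        have := hm2 x rfl
        omega
      have k1 := key b x hx
      have k2 := key b' y hy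
      rw [← hp] at k2
      exact (hok.ok_max b b' hb _ k1).1 k2
    · exact Or.inr trivial
    · exact Or.inl trivial
    · obtain ⟨u, h1, -⟩ := hx
      obtain ⟨w, h2, -⟩ := hy
      refine hok.tot b b' i j ⟨_, u, h1, rfl⟩ ⟨_, w, h2, rfl⟩ ?_
      rintro rfl
      exact hb (hok.dj b b' i ⟨_, u, h1, rfl⟩ ⟨_, w, h2, rfl⟩)
  have hiff : ∀ b b', b ≠ b' → ∀ (x : V b) (y : V b') o o', (G b).proc x = (G b').proc y →
      (G b).Nx (fun v => pos ⟨b, v⟩) x o → (G b').Nx (fun v => pos ⟨b', v⟩) y o' →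
      pos ⟨b, x⟩ < pos ⟨b', y⟩ → ltO lt o o' := by
    intro b b' hb x y o o' hp hx hy h
    rcases htot b b' hb x y o o' hp hx hy with h1 | h1
    · exact h1
    · have := hcross' b' b hb.symm y x o' o hp.symm hy hx h1
      omega
  constructor
  · exact hinj
  · rintro c ⟨b, u⟩ ⟨b', v⟩ hu hv
    have hb : b = b' := hok.dj b b' c ⟨_, u, hu, rfl⟩ ⟨_, v, hv, rfl⟩
    subst hb
    rw [(hg b).ch_fun c u v hu hv]
  · rintro c c' ⟨b, u⟩ hu hv
    exact (hg b).ch_inj c c' u hu hv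
  · rintro γ _ _ ⟨b, u, v, he⟩
    exact (hg b).edge_lt _ _ _ he
  · rintro _ _ ⟨b, u, v, he⟩
    exact (hg b).succ_proc _ _ he
  · rintro _ _ ⟨b', w⟩ ⟨b, u, v, he⟩ hw h1 h2
    by_cases hb : b = b'
    · subst hb
      exact (hg b).succ_cont u v w he hw h1 h2
    · replace hw : (G b').proc w = (G b).proc u := hw
      have hpv := (hg b).succ_proc _ _ he
      have huv := (hg b).edge_lt _ _ _ he
      by_cases hc : (G b).col u
      · obtain ⟨c, hc⟩ := hc
        obtain ⟨o, ho⟩ := (G b').Nx_ex (fun v => pos ⟨b', v⟩) w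
        have hl := hiff b b' hb u w _ _ hw.symm (Nx_col hc) ho h1
        obtain ⟨ov, hov⟩ := (G b).Nx_ex (fun v => pos ⟨b, v⟩) v
        have hl2 := hiff b' b (Ne.symm hb) w v _ _ (hw.trans hpv) ho hov h2
        rcases o with _ | j
        · exact hl2
        · obtain ⟨z, hz, hzp, hz1, hz2⟩ := ho
          obtain ⟨i', ⟨x', hx', hxp'⟩, hl3, hl4⟩ := hok.ok_hs b b' hb _ c j ⟨u, v, hc, he⟩
            ⟨u, hc, rfl⟩ ⟨z, hz, hzp.trans hw⟩ hl
          rw [hlt b b c i' u x' hc hx'] at hl3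
          have h5 : pos ⟨b, v⟩ ≤ pos ⟨b, x'⟩ := by
            by_contra hcon
            exact (hg b).succ_cont u v x' he hxp' hl3 (by omega)
          rcases ov with _ | jv
          · have := hov i' x' hx' (hxp'.trans hpv)
            simp only at this
            omega
          · obtain ⟨v', hv', hvp', hv1, hv2⟩ := hov
            have h6 := hv2 i' x' hx' (hxp'.trans hpv) h5
            simp only at h6
            have h7 := (hlt b' b j jv z v' hz hv').1 hl2
            have h8 := (hlt b b' i' j x' z hx' hz).1 hl4
            omega
      · obtain ⟨o, ho⟩ := (G b).Nx_ex (fun v => pos ⟨b, v⟩) u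
        obtain ⟨o', ho'⟩ := (G b').Nx_ex (fun v => pos ⟨b', v⟩) w
        have hnv : (G b).Nx (fun v => pos ⟨b, v⟩) v o := by
          rcases o with _ | i
          · intro c x hx hxp
            have := ho c x hx (hxp.trans hpv.symm)
            simp only at this ⊢
            omega
          · obtain ⟨x, hx, hxp, hx1, hx2⟩ := ho
            refine ⟨x, hx, hxp.trans hpv, ?_, ?_⟩
            · have hne : pos ⟨b, u⟩ ≠ pos ⟨b, x⟩ := by
                intro h
                have := (hg b).inj _ _ h
                subst this
                exact hc ⟨i, hx⟩
              by_contra hcon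
              exact (hg b).succ_cont u v x he hxp (by simp only at hx1 ⊢; omega) (by simp only at hcon ⊢; omega)
            · intro c' x' a1 a2 a3
              exact hx2 c' x' a1 (a2.trans hpv.symm) (by simp only at a3 ⊢; omega)
        have k1 := hiff b b' hb u w _ _ hw.symm ho ho' h1
        have k2 := hcross' b b' hb v w _ _ (hpv.symm.trans hw.symm) hnv ho' k1
        omega
  · rintro ⟨b, v⟩ hv
    rcases (hg b).has_pred v hv with ⟨u, hu⟩ | hm
    · exact Or.inl ⟨⟨b, u⟩, plus_edge.2 hu⟩
    · right
      rintro ⟨b', w⟩ hw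
      by_cases hb : b = b'
      · subst hb; exact hm w hw
      · exact (hmin b b' hb v hv hm w hw).le
  · rintro ⟨b, v⟩ hv
    rcases (hg b).has_succ v hv with ⟨u, hu⟩ | hm
    · exact Or.inl ⟨⟨b, u⟩, plus_edge.2 hu⟩
    · right
      rintro ⟨b', w⟩ hw
      by_cases hb : b = b'
      · subst hb; exact hm w hw
      · exact (hmax b b' hb v hv hm w hw).le
  · rintro d _ _ ⟨b, u, v, he⟩
    exact (hg b).wr _ _ _ he
  · rintro d d' _ _ _ _ ⟨b, u, v, he⟩ ⟨b', u', v', he'⟩ hor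
    have hb : b = b' := by
      rcases hor with h | h | h | h <;> exact congrArg Sigma.fst h
    subst hb
    have := (hg b).disj _ _ _ _ _ _ he he' (by simpa using hor)
    simpa using this
  · rintro d hd _ _ _ _ ⟨b, e, f, he⟩ ⟨b', e', f', he'⟩ h1 h2
    by_cases hb : b = b'
    · subst hb; exact (hg b).lifo d hd _ _ _ _ he he' h1 h2
    · by_contra hcon
      have hne := pos_ne hinj hb f f'
      obtain ⟨w1, w2⟩ := (hg b).wr _ _ _ he
      obtain ⟨w1', w2'⟩ := (hg b').wr _ _ _ he'
      have ws := A.stack_wr d hd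
      obtain ⟨o1, ho1⟩ := (G b).Nx_ex (fun v => pos ⟨b, v⟩) e
      obtain ⟨o2, ho2⟩ := (G b).Nx_ex (fun v => pos ⟨b, v⟩) f
      obtain ⟨o3, ho3⟩ := (G b').Nx_ex (fun v => pos ⟨b', v⟩) e'
      obtain ⟨o4, ho4⟩ := (G b').Nx_ex (fun v => pos ⟨b', v⟩) f'
      exact hok.ok_s b b' hb d hd o1 o2 o3 o4 ⟨e, f, he, ho1, ho2⟩ ⟨e', f', he', ho3, ho4⟩
        (hiff b b' hb e e' _ _ (w1.trans w1'.symm) ho1 ho3 h1)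
        (hiff b' b (Ne.symm hb) e' f _ _ (by rw [w1', w2, ws]) ho3 ho2 h2)
        (hiff b b' hb f f' _ _ (w2.trans w2'.symm) ho2 ho4 (by omega))
  · rintro d hd _ _ _ _ ⟨b, e, f, he⟩ ⟨b', e', f', he'⟩ h1
    by_cases hb : b = b'
    · subst hb; exact (hg b).fifo d hd _ _ _ _ he he' h1
    · by_contra hcon
      have hne := pos_ne hinj hb f f'
      obtain ⟨w1, w2⟩ := (hg b).wr _ _ _ he
      obtain ⟨w1', w2'⟩ := (hg b').wr _ _ _ he'
      obtain ⟨o1, ho1⟩ := (G b).Nx_ex (fun v => pos ⟨b, v⟩) e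
      obtain ⟨o2, ho2⟩ := (G b).Nx_ex (fun v => pos ⟨b, v⟩) f
      obtain ⟨o3, ho3⟩ := (G b').Nx_ex (fun v => pos ⟨b', v⟩) e'
      obtain ⟨o4, ho4⟩ := (G b').Nx_ex (fun v => pos ⟨b', v⟩) f'
      exact hok.ok_q b b' hb d hd o1 o2 o3 o4 ⟨e, f, he, ho1, ho2⟩ ⟨e', f', he', ho3, ho4⟩
        (hiff b b' hb e e' _ _ (w1.trans w1'.symm) ho1 ho3 h1)
        (hiff b' b (Ne.symm hb) f' f _ _ (w2'.trans w2.symm) ho4 ho2 (by omega))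

/-- The order generated by the two local orders and an order on colors. -/
inductive PlusLt (G : ∀ b, CG A K (V b)) (posb : ∀ b, V b → ℕ) (lt : K → K → Prop) :
    (Σ b, V b) → (Σ b, V b) → Prop
  | same (b : Bool) (u v : V b) : posb b u < posb b v → PlusLt G posb lt ⟨b, u⟩ ⟨b, v⟩
  | cross (b b' : Bool) (u c : V b) (c' v : V b') (i j : K) : (G b).ch i c → (G b').ch j c' →
      posb b u ≤ posb b c → lt i j → posb b' c' ≤ posb b' v → PlusLt G posb lt ⟨b, u⟩ ⟨b', v⟩

theorem plus_good [∀ b, Finite (V b)] {posb : ∀ b, V b → ℕ}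
    (hg : ∀ b, (G b).Good (posb b)) {lt : K → K → Prop}
    (hok : CSt.PlusOk (fun b => (G b).sum (posb b)) lt) :
    ∃ pos, (plus G).Good pos ∧
      (∀ b, (G b).sum (fun v => pos ⟨b, v⟩) = (G b).sum (posb b)) ∧
      ((plus G).sum pos).lt = lt := by
  have hres : ∀ b i j x y, (G b).ch i x → (G b).ch j y → (lt i j ↔ posb b x < posb b y) := by
    intro b i j x y hx hy
    rw [← hok.res b i j ⟨_, x, hx, rfl⟩ ⟨_, y, hy, rfl⟩]
    exact (hg b).lt_iff hx hy
  have hdj : ∀ b b' i x y, (G b).ch i x → (G b').ch i y → b = b' := by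
    intro b b' i x y hx hy
    exact hok.dj b b' i ⟨_, x, hx, rfl⟩ ⟨_, y, hy, rfl⟩
  have htri : ∀ b b' i j x y, (G b).ch i x → (G b').ch j y → i = j ∨ lt i j ∨ lt j i := by
    intro b b' i j x y hx hy
    by_cases h : i = j
    · exact Or.inl h
    · exact Or.inr (hok.tot b b' i j ⟨_, x, hx, rfl⟩ ⟨_, y, hy, rfl⟩ h)
  have hloc : ∀ b (u v : V b), PlusLt G posb lt ⟨b, u⟩ ⟨b, v⟩ → posb b u < posb b v := by
    intro b u v h
    cases h with
    | same _ _ _ h => exact h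
    | cross _ _ _ c c' _ i j hc hc' h1 h2 h3 =>
      have := (hres b i j c c' hc hc').1 h2
      omega
  have hirr : ∀ x, ¬ PlusLt G posb lt x x := by
    rintro ⟨b, u⟩ h
    exact lt_irrefl _ (hloc b u u h)
  have htr : ∀ x y z, PlusLt G posb lt x y → PlusLt G posb lt y z → PlusLt G posb lt x z := by
    rintro _ _ _ h1 h2
    cases h1 with
    | same b u v h1 =>
      cases h2 with
      | same _ _ w h2 => exact .same _ _ _ (by omega)
      | cross _ b' _ c c' w i j hc hc' a1 a2 a3 =>
        exact .cross _ _ _ c c' _ i j hc hc' (by omega) a2 a3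
    | cross b b' u c c' v i j hc hc' a1 a2 a3 =>
      cases h2 with
      | same _ _ w h2 => exact .cross _ _ _ c c' _ i j hc hc' a1 a2 (by omega)
      | cross _ b'' _ e e' w i' j' he he' b1 b2 b3 =>
        refine .cross _ _ _ c e' _ i j' hc he' a1 ?_ b3
        rcases htri b' b' j i' c' e hc' he with h | h | h
        · subst h; exact hok.tr _ _ _ a2 b2
        · exact hok.tr _ _ _ a2 (hok.tr _ _ _ h b2)
        · have := (hres b' i' j e c' he hc').1 h
          omega
  obtain ⟨pos, hinj, hpos⟩ := exists_pos (PlusLt G posb lt) hirr htr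
  have hpp : ∀ b (u v : V b), posb b u < posb b v ↔ pos ⟨b, u⟩ < pos ⟨b, v⟩ := by
    intro b u v
    refine ⟨fun h => hpos _ _ (.same _ _ _ h), fun h => ?_⟩
    by_contra hcon
    rcases (Nat.le_of_not_lt hcon).lt_or_eq with h' | h'
    · have := hpos _ _ (.same b _ _ h' : PlusLt G posb lt _ _)
      omega
    · have := (hg b).inj _ _ h'
      subst this
      omega
  have hlt : ∀ b b' c c' x y, (G b).ch c x → (G b').ch c' y →
      (lt c c' ↔ pos ⟨b, x⟩ < pos ⟨b', y⟩) := by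
    intro b b' c c' x y hx hy
    refine ⟨fun h => hpos _ _ (.cross _ _ _ x y _ c c' hx hy le_rfl h le_rfl), fun h => ?_⟩
    rcases htri b b' c c' x y hx hy with h' | h' | h'
    · subst h'
      have := hdj b b' c x y hx hy
      subst this
      have := (hg b).ch_fun c x y hx hy
      subst this
      omega
    · exact h'
    · have := hpos _ _ (.cross _ _ _ y x _ c' c hy hx le_rfl h' le_rfl : PlusLt G posb lt _ _)
      omega
  have hsum : ∀ b, (G b).sum (fun v => pos ⟨b, v⟩) = (G b).sum (posb b) :=
    fun b => (sum_congr (hpp b)).symm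
  have hgood : (plus G).Good pos := by
    refine plus_good1 (fun x y h => hinj h) (fun b => (hg b).congr (hpp b)) (lt := lt) ?_ hlt
    simp only [hsum]
    exact hok
  refine ⟨pos, hgood, hsum, ?_⟩
  ext c c'
  constructor
  · rintro ⟨⟨b, x⟩, ⟨b', y⟩, hx, hy, h⟩
    exact (hlt b b' c c' x y hx hy).2 h
  · intro h
    obtain ⟨⟨b, _, x, hx, -⟩, ⟨b', _, y, hy, -⟩⟩ := hok.lact c c' h
    exact ⟨⟨b, x⟩, ⟨b', y⟩, hx, hy, (hlt b b' c c' x y hx hy).1 h⟩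

end CG

/-! ### Colored graphs of special tree terms -/

def V2 (X Y : Type) : Bool → Type
  | false => X
  | true => Y

instance V2.fin (X Y : Type) [hX : Finite X] [hY : Finite Y] (b : Bool) : Finite (V2 X Y b) := by
  cases b
  · exact hX
  · exact hY

def CG.two {A : Architecture} {K X Y : Type} (G₁ : CG A K X) (G₂ : CG A K Y) :
    ∀ b, CG A K (V2 X Y b)
  | false => G₁
  | true => G₂

def fc (k i : ℕ) : Fin (k + 1) := Fin.ofNat (k + 1) i

theorem fc_val {k i : ℕ} (h : i ≤ k) : (fc k i).val = i := by
  simp [fc]; omega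

theorem eq_fc {k i : ℕ} (h : i ≤ k) (c : Fin (k + 1)) : c = fc k i ↔ c.val = i := by
  rw [Fin.ext_iff, fc_val h]

namespace STT

section VT

variable {Vl El : Type}

def VT : STT Vl El → Type
  | .atom _ _ => Unit
  | .add _ _ _ τ => VT τ
  | .forget _ τ => VT τ
  | .plus τ₁ τ₂ => Σ b, V2 (VT τ₁) (VT τ₂) b

theorem VT_fin : ∀ τ : STT Vl El, Finite (VT τ)
  | .atom _ _ => (inferInstance : Finite Unit)
  | .add _ _ _ τ => VT_fin τ
  | .forget _ τ => VT_fin τ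
  | .plus τ₁ τ₂ => by
    have := VT_fin τ₁
    have := VT_fin τ₂
    exact (inferInstance : Finite (Σ b, V2 (VT τ₁) (VT τ₂) b))

def enc2 {X Y : Type} (f : X → List Bool) (g : Y → List Bool) :
    (Σ b, V2 X Y b) → List Bool
  | ⟨false, x⟩ => false :: f x
  | ⟨true, y⟩ => true :: g y

def enc : (τ : STT Vl El) → VT τ → List Bool
  | .atom _ _ => fun _ => []
  | .add _ _ _ τ => fun v => false :: enc τ v
  | .forget _ τ => fun v => false :: enc τ v
  | .plus τ₁ τ₂ => enc2 (enc τ₁) (enc τ₂)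

end VT

variable {A : Architecture} {Alph : Type}

def cg (k : ℕ) : (τ : STT (Alph × A.Procs) (Option A.DS)) → CG A (Fin (k + 1)) (VT τ)
  | .atom i a => CG.atom A (fc k i) a.2
  | .add γ i j τ => (cg k τ).add γ (fc k i) (fc k j)
  | .forget i τ => (cg k τ).forget (fc k i)
  | .plus τ₁ τ₂ => CG.plus (CG.two (cg k τ₁) (cg k τ₂))

structure Rep {k : ℕ} {V : Type} (τ : STT (Alph × A.Procs) (Option A.DS))
    (G : CG A (Fin (k + 1)) V) (enc : V → List Bool) : Prop where
  inj : ∀ x y, enc x = enc y → x = y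
  lab : ∀ v, ∃ a, τ.vlabel (enc v) = some (a, G.proc v)
  surj : ∀ u, (τ.vlabel u).isSome → ∃ v, u = enc v
  edge : ∀ γ u v, τ.edgeRel γ u v ↔ ∃ x y, u = enc x ∧ v = enc y ∧ G.edge γ x y
  ch : ∀ (c : Fin (k + 1)) x, G.ch c x ↔ τ.chi c.val = some (enc x)
  chi : ∀ i u, τ.chi i = some u → i ≤ k ∧ ∃ x, u = enc x
  ci : ∀ i j u, τ.chi i = some u → τ.chi j = some u → i = j
  act : ∀ i, i ∈ τ.activeColors ↔ ∃ u, τ.chi i = some u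

theorem rep (k : ℕ) (τ : STT (Alph × A.Procs) (Option A.DS)) (hv : τ.Valid k) :
    Rep τ (cg k τ) τ.enc := by
  induction τ with
  | atom i a =>
    obtain ⟨a, p⟩ := a
    obtain ⟨h1, h2⟩ := hv
    constructor
    · intro x y _; exact (rfl : (() : Unit) = ())
    · intro v; exact ⟨a, rfl⟩
    · intro u hu
      cases u with
      | nil => exact ⟨(), rfl⟩
      | cons b u => simp [vlabel] at hu
    · intro γ u v
      simp [edgeRel, cg, CG.atom]
    · intro c x
      simp only [cg, CG.atom, STT.chi, enc, eq_fc h2]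
      split_ifs with h <;> simp [h]
    · intro j u h
      simp only [STT.chi] at h
      split_ifs at h with h'
      subst h'
      simp only [Option.some.injEq] at h
      exact ⟨h2, (), h.symm⟩
    · intro j j' u h h'
      simp only [STT.chi] at h h'
      split_ifs at h h' with h1 h2
      rw [h1, h2]
    · intro j
      simp only [activeColors, STT.chi]
      split_ifs with h <;> simp [h]
  | add γ i j τ ih =>
    obtain ⟨h1, h2, h3, h4, hv⟩ := hv
    have ih := ih hv
    constructor
    · intro x y h
      exact ih.inj x y (List.cons.inj h).2
    · intro v
      exact ih.lab v
    · intro u hu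
      cases u with
      | nil => simp [vlabel] at hu
      | cons b u =>
        cases b
        · obtain ⟨x, rfl⟩ := ih.surj u hu
          exact ⟨x, rfl⟩
        · simp [vlabel] at hu
    · intro γ' u v
      constructor
      · rintro (⟨u', v', rfl, rfl, h⟩ | ⟨rfl, pu, pv, h5, h6, rfl, rfl⟩)
        · obtain ⟨x, y, rfl, rfl, hE⟩ := (ih.edge _ _ _).1 h
          exact ⟨x, y, rfl, rfl, Or.inl hE⟩
        · obtain ⟨-, x, rfl⟩ := ih.chi _ _ h5
          obtain ⟨-, y, rfl⟩ := ih.chi _ _ h6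
          refine ⟨x, y, rfl, rfl, Or.inr ⟨rfl, ?_, ?_⟩⟩
          · rw [ih.ch, fc_val h2, h5]
          · rw [ih.ch, fc_val h4, h6]
      · rintro ⟨x, y, rfl, rfl, h | ⟨rfl, h5, h6⟩⟩
        · exact Or.inl ⟨_, _, rfl, rfl, (ih.edge _ _ _).2 ⟨x, y, rfl, rfl, h⟩⟩
        · replace h5 := (ih.ch _ _).1 h5
          replace h6 := (ih.ch _ _).1 h6
          rw [fc_val h2] at h5
          rw [fc_val h4] at h6
          exact Or.inr ⟨rfl, _, _, h5, h6, rfl, rfl⟩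
    · intro c x
      have := ih.ch c x
      simp only [STT.chi, enc, cg, CG.add, Option.map_eq_some_iff, List.cons.injEq, true_and,
        exists_eq_right]
      exact this
    · intro c u h
      simp only [STT.chi, Option.map_eq_some_iff] at h
      obtain ⟨u, h, rfl⟩ := h
      obtain ⟨h5, x, rfl⟩ := ih.chi _ _ h
      exact ⟨h5, x, rfl⟩
    · intro c c' u h h'
      simp only [STT.chi, Option.map_eq_some_iff] at h h'
      obtain ⟨u, h, rfl⟩ := h
      obtain ⟨u', h', hh⟩ := h'
      obtain rfl := (List.cons.inj hh).2
      exact ih.ci _ _ _ h h'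
    · intro c
      simp only [activeColors, STT.chi, Option.map_eq_some_iff]
      rw [ih.act]
      constructor
      · rintro ⟨u, h⟩; exact ⟨_, u, h, rfl⟩
      · rintro ⟨_, u, h, _⟩; exact ⟨u, h⟩
  | forget i τ ih =>
    obtain ⟨h1, h2, hv⟩ := hv
    have ih := ih hv
    constructor
    · intro x y h
      exact ih.inj x y (List.cons.inj h).2
    · intro v
      exact ih.lab v
    · intro u hu
      cases u with
      | nil => simp [vlabel] at hu
      | cons b u =>
        cases b
        · obtain ⟨x, rfl⟩ := ih.surj u hu
          exact ⟨x, rfl⟩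
        · simp [vlabel] at hu
    · intro γ' u v
      constructor
      · rintro ⟨u', v', rfl, rfl, h⟩
        obtain ⟨x, y, rfl, rfl, hE⟩ := (ih.edge _ _ _).1 h
        exact ⟨x, y, rfl, rfl, hE⟩
      · rintro ⟨x, y, rfl, rfl, h⟩
        exact ⟨_, _, rfl, rfl, (ih.edge _ _ _).2 ⟨x, y, rfl, rfl, h⟩⟩
    · intro c x
      have := ih.ch c x
      simp only [STT.chi, enc, cg, CG.forget, ne_eq, eq_fc h2]
      split_ifs with h
      · simp [h]
      · simp only [h, not_false_eq_true, true_and, Option.map_eq_some_iff, List.cons.injEq,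
          exists_eq_right]
        exact this
    · intro c u h
      simp only [STT.chi] at h
      split_ifs at h
      simp only [Option.map_eq_some_iff] at h
      obtain ⟨u, h, rfl⟩ := h
      obtain ⟨h5, x, rfl⟩ := ih.chi _ _ h
      exact ⟨h5, x, rfl⟩
    · intro c c' u h h'
      simp only [STT.chi] at h h'
      split_ifs at h h'
      simp only [Option.map_eq_some_iff] at h h'
      obtain ⟨u, h, rfl⟩ := h
      obtain ⟨u', h', hh⟩ := h'
      obtain rfl := (List.cons.inj hh).2
      exact ih.ci _ _ _ h h'
    · intro c
      simp only [activeColors, STT.chi]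
      rw [Set.mem_sdiff, ih.act]
      split_ifs with h
      · simp [h]
      · simp [h]
  | plus τ₁ τ₂ ih₁ ih₂ =>
    obtain ⟨hv₁, hv₂, hd⟩ := hv
    have ih₁ := ih₁ hv₁
    have ih₂ := ih₂ hv₂
    have hchi : ∀ c u, (plus τ₁ τ₂).chi c = some u ↔
        (∃ u', u = false :: u' ∧ τ₁.chi c = some u') ∨ (∃ u', u = true :: u' ∧ τ₂.chi c = some u') := by
      intro c u
      simp only [STT.chi]
      cases h : τ₁.chi c with
      | some p =>
        have h2 : ∀ q, τ₂.chi c ≠ some q := by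
          intro q hq
          exact Set.disjoint_left.1 hd ((ih₁.act c).2 ⟨p, h⟩) ((ih₂.act c).2 ⟨q, hq⟩)
        simp [h2, eq_comm]
      | none => simp [eq_comm, and_comm]
    constructor
    · rintro ⟨b, x⟩ ⟨b', y⟩ h
      cases b <;> cases b' <;> simp only [enc, enc2, List.cons.injEq, true_and, reduceCtorEq,
        false_and] at h
      · rw [ih₁.inj _ _ h]
      · rw [ih₂.inj _ _ h]
    · rintro ⟨b, v⟩
      cases b
      · exact ih₁.lab v
      · exact ih₂.lab v
    · intro u hu
      cases u with
      | nil => simp [vlabel] at hu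
      | cons b u =>
        cases b
        · obtain ⟨x, rfl⟩ := ih₁.surj u hu
          exact ⟨⟨false, x⟩, rfl⟩
        · obtain ⟨x, rfl⟩ := ih₂.surj u hu
          exact ⟨⟨true, x⟩, rfl⟩
    · intro γ' u v
      constructor
      · rintro (⟨u', v', rfl, rfl, h⟩ | ⟨u', v', rfl, rfl, h⟩)
        · obtain ⟨x, y, rfl, rfl, hE⟩ := (ih₁.edge _ _ _).1 h
          exact ⟨⟨false, x⟩, ⟨false, y⟩, rfl, rfl, CG.PlusEdge.mk (G := CG.two _ _) false x y hE⟩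
        · obtain ⟨x, y, rfl, rfl, hE⟩ := (ih₂.edge _ _ _).1 h
          exact ⟨⟨true, x⟩, ⟨true, y⟩, rfl, rfl, CG.PlusEdge.mk (G := CG.two _ _) true x y hE⟩
      · rintro ⟨x, y, rfl, rfl, h⟩
        obtain ⟨b, x, y, h⟩ := h
        cases b
        · exact Or.inl ⟨_, _, rfl, rfl, (ih₁.edge _ _ _).2 ⟨x, y, rfl, rfl, h⟩⟩
        · exact Or.inr ⟨_, _, rfl, rfl, (ih₂.edge _ _ _).2 ⟨x, y, rfl, rfl, h⟩⟩
    · rintro c ⟨b, x⟩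
      rw [hchi]
      cases b
      · have := ih₁.ch c x
        simp only [enc, enc2, List.cons.injEq, true_and, reduceCtorEq, false_and, exists_false,
          or_false, exists_eq_left']
        exact this
      · have := ih₂.ch c x
        simp only [enc, enc2, List.cons.injEq, true_and, reduceCtorEq, false_and, exists_false,
          false_or, exists_eq_left']
        exact this
    · intro c u h
      rw [hchi] at h
      rcases h with ⟨u, rfl, h⟩ | ⟨u, rfl, h⟩
      · obtain ⟨h5, x, rfl⟩ := ih₁.chi _ _ h
        exact ⟨h5, ⟨false, x⟩, rfl⟩
      · obtain ⟨h5, x, rfl⟩ := ih₂.chi _ _ h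
        exact ⟨h5, ⟨true, x⟩, rfl⟩
    · intro c c' u h h'
      rw [hchi] at h h'
      rcases h with ⟨u, rfl, h⟩ | ⟨u, rfl, h⟩ <;> rcases h' with ⟨u', he, h'⟩ | ⟨u', he, h'⟩ <;>
        simp only [List.cons.injEq, true_and, reduceCtorEq, false_and] at he
      · subst he; exact ih₁.ci _ _ _ h h'
      · subst he; exact ih₂.ci _ _ _ h h'
    · intro c
      simp only [hchi, activeColors]
      rw [Set.mem_union, ih₁.act, ih₂.act]
      constructor
      · rintro (⟨u, h⟩ | ⟨u, h⟩)
        · exact ⟨_, Or.inl ⟨u, rfl, h⟩⟩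
        · exact ⟨_, Or.inr ⟨u, rfl, h⟩⟩
      · rintro ⟨_, ⟨u, _, h⟩ | ⟨u, _, h⟩⟩
        · exact Or.inl ⟨u, h⟩
        · exact Or.inr ⟨u, h⟩

theorem Rep.ch_fun {k : ℕ} {V : Type} {τ : STT (Alph × A.Procs) (Option A.DS)}
    {G : CG A (Fin (k + 1)) V} {enc : V → List Bool} (h : Rep τ G enc) :
    ∀ c u v, G.ch c u → G.ch c v → u = v := by
  intro c u v h1 h2
  rw [h.ch] at h1 h2
  exact h.inj _ _ (Option.some.inj (h1.symm.trans h2))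

theorem Rep.ch_inj {k : ℕ} {V : Type} {τ : STT (Alph × A.Procs) (Option A.DS)}
    {G : CG A (Fin (k + 1)) V} {enc : V → List Bool} (h : Rep τ G enc) :
    ∀ c c' u, G.ch c u → G.ch c' u → c = c' := by
  intro c c' u h1 h2
  rw [h.ch] at h1 h2
  exact Fin.ext (h.ci _ _ _ h1 h2)

theorem Rep.act_iff {k : ℕ} {V : Type} {τ : STT (Alph × A.Procs) (Option A.DS)}
    {G : CG A (Fin (k + 1)) V} {enc : V → List Bool} (h : Rep τ G enc) (i : ℕ) :
    i ∈ τ.activeColors ↔ ∃ c : Fin (k + 1), c.val = i ∧ ∃ x, G.ch c x := by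
  rw [h.act]
  constructor
  · rintro ⟨u, hu⟩
    obtain ⟨h1, x, rfl⟩ := h.chi _ _ hu
    exact ⟨⟨i, by omega⟩, rfl, x, (h.ch _ _).2 hu⟩
  · rintro ⟨c, rfl, x, hx⟩
    exact ⟨_, (h.ch _ _).1 hx⟩

end STT

/-! ### The automaton -/

namespace CSt

variable {A : Architecture}

abbrev Code (A : Architecture) (K : Type) : Type :=
  (K → A.Procs → Prop) × (K → K → Prop) × (K → K → Prop) × (K → Prop) × (K → Prop) ×
    (A.DS → K → K → Prop) × (K → Prop) × (A.Procs → Prop) × (A.Procs → Prop) ×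
    (A.DS → Option K → Option K → Prop)

def code {K : Type} (s : CSt A K) : Code A K :=
  (s.pr, s.lt, s.succ, s.hp, s.hs, s.mat, s.tch, s.fmin, s.fmax, s.S)

theorem code_inj {K : Type} : Function.Injective (code : CSt A K → Code A K) := by
  intro s s' h
  simp only [code, Prod.mk.injEq] at h
  obtain ⟨h1, h2, h3, h4, h5, h6, h7, h8, h9, h10⟩ := h
  cases s; cases s'
  simp only at h1 h2 h3 h4 h5 h6 h7 h8 h9 h10
  subst h1 h2 h3 h4 h5 h6 h7 h8 h9 h10
  rfl

instance fin (k : ℕ) : Finite (CSt A (Fin (k + 1))) := Finite.of_injective _ code_inj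

theorem exp_bound (k P D : ℕ) (hk : 1 ≤ k) (hP : 1 ≤ P) :
    P * (k + 1) + (k + 1) * (k + 1) + (k + 1) * (k + 1) + (k + 1) + (k + 1) +
      (k + 1) * (k + 1) * D + (k + 1) + P + P + (k + 2) * (k + 2) * D ≤
      20 * k ^ 2 * (P + D) := by
  have a1 : k ≤ k * k := by nlinarith
  have a2 : 1 ≤ k * k := by nlinarith
  have b1 : (k + 1) * (k + 1) ≤ 4 * (k * k) := by nlinarith
  have b2 : (k + 2) * (k + 2) ≤ 9 * (k * k) := by nlinarith
  have c1 : (k + 1) * (k + 1) * D ≤ 4 * (k * k) * D := Nat.mul_le_mul_right _ b1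
  have c2 : (k + 2) * (k + 2) * D ≤ 9 * (k * k) * D := Nat.mul_le_mul_right _ b2
  have d1 : P * (k + 1) ≤ P * (2 * (k * k)) := Nat.mul_le_mul_left _ (by omega)
  have d2 : P ≤ P * (k * k) := by nlinarith
  have d3 : k * k ≤ P * (k * k) := by nlinarith
  have e : 20 * k ^ 2 * (P + D) = 20 * (P * (k * k)) + 20 * (k * k * D) := by ring
  have e1 : 4 * (k * k) * D = 4 * (k * k * D) := by ring
  have e2 : 9 * (k * k) * D = 9 * (k * k * D) := by ring
  have e3 : P * (2 * (k * k)) = 2 * (P * (k * k)) := by ring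
  rw [e1] at c1
  rw [e2] at c2
  rw [e3] at d1
  rw [e]
  omega

theorem card_le (k : ℕ) (hk : 1 ≤ k) (hP : 1 ≤ Fintype.card A.Procs) :
    Nat.card (CSt A (Fin (k + 1))) ≤
      2 ^ (20 * k ^ 2 * (Fintype.card A.Procs + Fintype.card A.DS)) := by
  refine (Nat.card_le_card_of_injective _ (code_inj (A := A) (K := Fin (k + 1)))).trans ?_
  have h2 : Nat.card Prop = 2 := by simp
  simp only [Code, Nat.card_prod, Nat.card_fun, h2, ← pow_mul, ← pow_add]
  simp only [Nat.card_eq_fintype_card, Fintype.card_fin, Fintype.card_option]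
  refine Nat.pow_le_pow_right (Nat.succ_pos 1) (le_trans (le_of_eq ?_)
    (exp_bound k (Fintype.card A.Procs) (Fintype.card A.DS) hk hP))
  ring

end CSt

section Aut

variable (A : Architecture) (Alph : Type) (k : ℕ)

def sel {X : Type} (a b : X) : Bool → X
  | false => a
  | true => b

def leafR : STTLabel (Alph × A.Procs) (Option A.DS) → CSt A (Fin (k + 1)) → Prop
  | .atom i a, s => 1 ≤ i ∧ i ≤ k ∧ s = CSt.atomSt A (fc k i) a.2
  | _, _ => False

def unaryR : STTLabel (Alph × A.Procs) (Option A.DS) → CSt A (Fin (k + 1)) →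
    CSt A (Fin (k + 1)) → Prop
  | .add γ i j, s', s => 1 ≤ i ∧ i ≤ k ∧ 1 ≤ j ∧ j ≤ k ∧ s'.AddOk γ (fc k i) (fc k j) ∧
      s = s'.addUpd γ (fc k i) (fc k j)
  | .forget i, s', s => 1 ≤ i ∧ i ≤ k ∧ s'.ForgetOk (fc k i) ∧ s = s'.forgetUpd (fc k i)
  | _, _, _ => False

def binaryR : STTLabel (Alph × A.Procs) (Option A.DS) → CSt A (Fin (k + 1)) →
    CSt A (Fin (k + 1)) → CSt A (Fin (k + 1)) → Prop
  | .plus, s₁, s₂, s => ∃ lt, CSt.PlusOk (sel s₁ s₂) lt ∧ s = CSt.plusUpd (sel s₁ s₂) lt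
  | _, _, _, _ => False

noncomputable def theAut : BUTA (STTLabel (Alph × A.Procs) (Option A.DS)) where
  State := CSt A (Fin (k + 1))
  stFintype := Fintype.ofFinite _
  leafT := leafR A Alph k
  unaryT := unaryR A Alph k
  binaryT := binaryR A Alph k
  accept s := ∀ c p, ¬ s.pr c p

variable {A Alph k}

theorem two_sum {X Y : Type} (G₁ : CG A (Fin (k + 1)) X) (G₂ : CG A (Fin (k + 1)) Y)
    (posb : ∀ b, V2 X Y b → ℕ) : (fun b => (CG.two G₁ G₂ b).sum (posb b)) =
      sel (G₁.sum (posb false)) (G₂.sum (posb true)) := by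
  funext b
  cases b <;> rfl

theorem runs_fwd {t : BTree (STTLabel (Alph × A.Procs) (Option A.DS))}
    {s : (theAut A Alph k).State} (h : (theAut A Alph k).Runs t s) :
    ∃ τ : STT (Alph × A.Procs) (Option A.DS), t = τ.toTree ∧ τ.Valid k ∧
      ∃ pos, (τ.cg k).Good pos ∧ (τ.cg k).sum pos = s := by
  induction h with
  | @leaf l s h =>
    cases l with
    | atom i a =>
      obtain ⟨h1, h2, rfl⟩ := h
      exact ⟨.atom i a, rfl, ⟨h1, h2⟩, fun _ => 0, CG.atom_good _ _ _, CG.atom_sum _ _ _⟩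
    | _ => exact h.elim
  | @unary l t s' s h _ ih =>
    obtain ⟨τ, rfl, hv, pos, hg, rfl⟩ := ih
    cases l with
    | add γ i j =>
      obtain ⟨h1, h2, h3, h4, hok, rfl⟩ := h
      exact ⟨.add γ i j τ, rfl, ⟨h1, h2, h3, h4, hv⟩, pos, CG.add_good hg hok, CG.add_sum hg⟩
    | forget i =>
      obtain ⟨h1, h2, hok, rfl⟩ := h
      have hg' := CG.forget_good hg hok
      exact ⟨.forget i τ, rfl, ⟨h1, h2, hv⟩, pos, hg', CG.forget_sum hg hg'⟩
    | _ => exact h.elim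
  | @binary l t₁ t₂ s₁ s₂ s h _ _ ih₁ ih₂ =>
    obtain ⟨τ₁, rfl, hv₁, pos₁, hg₁, rfl⟩ := ih₁
    obtain ⟨τ₂, rfl, hv₂, pos₂, hg₂, rfl⟩ := ih₂
    cases l with
    | plus =>
      obtain ⟨lt, hok, rfl⟩ := h
      let posb : ∀ b, V2 τ₁.VT τ₂.VT b → ℕ
        | false => pos₁
        | true => pos₂
      have hs : (fun b => (CG.two (τ₁.cg k) (τ₂.cg k) b).sum (posb b)) =
          sel ((τ₁.cg k).sum pos₁) ((τ₂.cg k).sum pos₂) := two_sum _ _ posb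
      have hfin : ∀ b, Finite (V2 τ₁.VT τ₂.VT b) := fun b => by
        have := τ₁.VT_fin
        have := τ₂.VT_fin
        infer_instance
      have hok' := hok
      rw [← hs] at hok
      obtain ⟨pos, hg, hsum, hlt⟩ := CG.plus_good (posb := posb)
        (fun b => by cases b; exacts [hg₁, hg₂]) hok
      refine ⟨.plus τ₁ τ₂, rfl, ⟨hv₁, hv₂, ?_⟩, pos, hg, ?_⟩
      · rw [Set.disjoint_left]
        intro i h1 h2
        rw [(τ₁.rep k hv₁).act_iff] at h1
        rw [(τ₂.rep k hv₂).act_iff] at h2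
        obtain ⟨c, rfl, x, hx⟩ := h1
        obtain ⟨c', hc, y, hy⟩ := h2
        have : c' = c := Fin.ext hc
        subst this
        have := hok'.dj false true c' ⟨_, x, hx, rfl⟩ ⟨_, y, hy, rfl⟩
        exact Bool.noConfusion this
      · have h1 := CG.plus_sum hg
        rw [hlt, funext hsum, hs] at h1
        exact h1
    | _ => exact h.elim

theorem runs_bwd (τ : STT (Alph × A.Procs) (Option A.DS)) (hv : τ.Valid k) (pos : τ.VT → ℕ)
    (hg : (τ.cg k).Good pos) : (theAut A Alph k).Runs τ.toTree ((τ.cg k).sum pos) := by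
  induction τ with
  | atom i a =>
    refine .leaf ?_
    exact ⟨hv.1, hv.2, CG.atom_sum _ _ _⟩
  | add γ i j τ ih =>
    obtain ⟨h1, h2, h3, h4, hv⟩ := hv
    have hg' : (τ.cg k).Good pos := CG.add_good_of hg
    refine .unary ?_ (ih hv pos hg')
    exact ⟨h1, h2, h3, h4, CG.add_ok_of hg, CG.add_sum hg'⟩
  | forget i τ ih =>
    obtain ⟨h1, h2, hv⟩ := hv
    have hr := τ.rep k hv
    have hg' : (τ.cg k).Good pos := CG.forget_good_of hr.ch_fun hr.ch_inj hg
    refine .unary ?_ (ih hv pos hg')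
    exact ⟨h1, h2, CG.forget_ok_of hg' hg, CG.forget_sum hg' hg⟩
  | plus τ₁ τ₂ ih₁ ih₂ =>
    obtain ⟨hv₁, hv₂, -⟩ := hv
    have hg' := CG.plus_good_of (G := CG.two (τ₁.cg k) (τ₂.cg k)) hg
    refine .binary ?_ (ih₁ hv₁ (fun v => pos ⟨false, v⟩) (hg' false))
      (ih₂ hv₂ (fun v => pos ⟨true, v⟩) (hg' true))
    have hok := CG.plus_ok_of (G := CG.two (τ₁.cg k) (τ₂.cg k)) hg
    have hsum := CG.plus_sum (G := CG.two (τ₁.cg k) (τ₂.cg k)) hg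
    rw [two_sum (τ₁.cg k) (τ₂.cg k) (fun b v => pos ⟨b, v⟩)] at hok
    rw [two_sum (τ₁.cg k) (τ₂.cg k) (fun b v => pos ⟨b, v⟩)] at hsum
    exact ⟨_, hok, hsum⟩

end Aut

/-! ### Colorless graphs and CBMs -/

theorem ex_list {V : Type} [Finite V] (pos : V → ℕ) (hinj : ∀ x y, pos x = pos y → x = y)
    (P : V → Prop) : ∃ l : List V, (∀ v, v ∈ l ↔ P v) ∧ l.Pairwise (fun x y => pos x < pos y) := by
  classical
  have : Fintype V := Fintype.ofFinite V
  have key : ∀ s : Finset V, ∃ l : List V, (∀ v, v ∈ l ↔ v ∈ s) ∧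
      l.Pairwise (fun x y => pos x < pos y) := by
    intro s
    induction s using Finset.induction_on_max_value pos with
    | empty => exact ⟨[], by simp, by simp⟩
    | insert a s ha hm ih =>
      obtain ⟨l, h1, h2⟩ := ih
      refine ⟨l ++ [a], ?_, ?_⟩
      · intro v
        simp [h1, or_comm]
      · rw [List.pairwise_append]
        refine ⟨h2, by simp, ?_⟩
        intro x hx y hy
        simp only [List.mem_singleton] at hy
        subst hy
        have hx' := (h1 x).1 hx
        rcases (hm x hx').lt_or_eq with h | h
        · exact h
        · rw [hinj _ _ h] at hx'
          exact (ha hx').elim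
  obtain ⟨l, h1, h2⟩ := key (Finset.univ.filter P)
  exact ⟨l, by simpa using h1, h2⟩

namespace STT

variable {A : Architecture} {Alph : Type} {k : ℕ} {V : Type}
  {τ : STT (Alph × A.Procs) (Option A.DS)} {G : CG A (Fin (k + 1)) V} {enc : V → List Bool}

theorem Rep.trans (h : Rep τ G enc) {x y : V}
    (ht : Relation.TransGen (fun u w => ∃ γ, G.edge γ u w) x y) :
    Relation.TransGen (fun u w => ∃ γ, τ.edgeRel γ u w) (enc x) (enc y) :=
  ht.lift enc fun a b ⟨γ, hab⟩ => ⟨γ, (h.edge _ _ _).2 ⟨a, b, rfl, rfl, hab⟩⟩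

theorem Rep.trans_inv (h : Rep τ G enc) {u v : List Bool}
    (ht : Relation.TransGen (fun u w => ∃ γ, τ.edgeRel γ u w) u v) :
    ∃ x y, u = enc x ∧ v = enc y ∧ Relation.TransGen (fun u w => ∃ γ, G.edge γ u w) x y := by
  induction ht with
  | single he =>
    obtain ⟨γ, he⟩ := he
    obtain ⟨x, y, h1, h2, h3⟩ := (h.edge _ _ _).1 he
    exact ⟨x, y, h1, h2, .single ⟨γ, h3⟩⟩
  | tail _ he ih =>
    obtain ⟨γ, he⟩ := he
    obtain ⟨x, y, h1, h2, h3⟩ := (h.edge _ _ _).1 he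
    obtain ⟨x', y', h1', h2', h3'⟩ := ih
    have : y' = x := h.inj _ _ (h2'.symm.trans h1)
    subst this
    exact ⟨x', y, h1', h2, h3'.tail ⟨γ, h3⟩⟩

theorem Rep.trans_iff (h : Rep τ G enc) {x y : V} :
    Relation.TransGen (fun u w => ∃ γ, τ.edgeRel γ u w) (enc x) (enc y) ↔
      Relation.TransGen (fun u w => ∃ γ, G.edge γ u w) x y := by
  refine ⟨fun ht => ?_, h.trans⟩
  obtain ⟨x', y', h1, h2, h3⟩ := h.trans_inv ht
  rw [h.inj _ _ h1, h.inj _ _ h2]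
  exact h3

theorem Rep.edge_iff (h : Rep τ G enc) {γ : Option A.DS} {x y : V} :
    τ.edgeRel γ (enc x) (enc y) ↔ G.edge γ x y := by
  rw [h.edge]
  constructor
  · rintro ⟨x', y', h1, h2, h3⟩
    rw [h.inj _ _ h1, h.inj _ _ h2]
    exact h3
  · intro h'
    exact ⟨x, y, rfl, rfl, h'⟩

theorem Rep.proc_of (h : Rep τ G enc) {x : V} {a : Alph} {p : A.Procs}
    (hx : τ.vlabel (enc x) = some (a, p)) : G.proc x = p := by
  obtain ⟨b, hb⟩ := h.lab x
  rw [hb] at hx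
  simp only [Option.some.injEq, Prod.mk.injEq] at hx
  exact hx.2

theorem good_of_cbm [Finite V] (h : Rep τ G enc) (hn : ∀ c x, ¬ G.ch c x)
    (hc : IsCBMGraph A Alph τ.vertices τ.vlabel τ.edgeRel) : ∃ pos, G.Good pos := by
  obtain ⟨-, -, hlin, hsp, hwr, hdisj, hacyc, hlifo, hfifo⟩ := hc
  obtain ⟨pos, hinj, hpos⟩ := exists_pos
    (Relation.TransGen (fun u w => ∃ γ, G.edge γ u w))
    (fun v hv => hacyc _ (h.trans hv)) (fun _ _ _ h1 h2 => h1.trans h2)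
  -- index lists
  have hidx : ∀ p : A.Procs, ∃ l : List (List Bool),
      (∀ x, G.proc x = p → ∃ n : ℕ, l[n]? = some (enc x)) ∧
      (∀ (n : ℕ) u, l[n]? = some u → ∃ x, u = enc x ∧ G.proc x = p) ∧
      (∀ x y, G.proc x = p → G.proc y = p →
        (G.edge none x y ↔ ∃ n : ℕ, l[n]? = some (enc x) ∧ l[n + 1]? = some (enc y))) ∧
      (∀ (n m : ℕ) x y, l[n]? = some (enc x) → l[m]? = some (enc y) → n < m →
        Relation.TransGen (fun u w => ∃ γ, G.edge γ u w) x y) := by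
    intro p
    obtain ⟨l, -, hmem, hed⟩ := hlin p
    have c1 : ∀ x, G.proc x = p → enc x ∈ l := by
      intro x hx
      obtain ⟨a, ha⟩ := h.lab x
      rw [hx] at ha
      exact (hmem _).2 ⟨by simp [vertices, ha], a, ha⟩
    have c2 : ∀ u, u ∈ l → ∃ x, u = enc x ∧ G.proc x = p := by
      intro u hu
      obtain ⟨h1, a, h2⟩ := (hmem _).1 hu
      obtain ⟨x, rfl⟩ := h.surj u h1
      exact ⟨x, rfl, h.proc_of h2⟩
    have c3 : ∀ x y, G.proc x = p → G.proc y = p →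
        (G.edge none x y ↔ ∃ n : ℕ, l[n]? = some (enc x) ∧ l[n + 1]? = some (enc y)) := by
      intro x y hx hy
      rw [← h.edge_iff]
      exact hed _ _ (c1 x hx) (c1 y hy)
    have c2' : ∀ (n : ℕ) u, l[n]? = some u → ∃ x, u = enc x ∧ G.proc x = p :=
      fun n u hu => c2 u (List.mem_of_getElem? hu)
    have c4 : ∀ (d n : ℕ) x y, l[n]? = some (enc x) → l[n + d + 1]? = some (enc y) →
        Relation.TransGen (fun u w => ∃ γ, G.edge γ u w) x y := by
      intro d
      induction d with
      | zero =>
        intro n x y hx hy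
        obtain ⟨x', hx1, hx2⟩ := c2' _ _ hx
        obtain ⟨y', hy1, hy2⟩ := c2' _ _ hy
        rw [← h.inj _ _ hx1] at hx2
        rw [← h.inj _ _ hy1] at hy2
        exact .single ⟨none, (c3 x y hx2 hy2).2 ⟨n, hx, hy⟩⟩
      | succ d ih =>
        intro n x y hx hy
        obtain ⟨y', hy1, hy2⟩ := c2' _ _ hy
        rw [← h.inj _ _ hy1] at hy2
        have hlen : n + (d + 1) + 1 < l.length := (List.getElem?_eq_some_iff.1 hy).1
        obtain ⟨z, hz1, hz2⟩ := c2' (n + d + 1) _ (List.getElem?_eq_getElem (by omega))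
        have hz : l[n + d + 1]? = some (enc z) := by
          rw [List.getElem?_eq_getElem (by omega), hz1]
        exact (ih n x z hx hz).tail ⟨none, (c3 z y hz2 hy2).2 ⟨n + d + 1, hz, hy⟩⟩
    refine ⟨l, ?_, c2', c3, ?_⟩
    · intro x hx
      exact List.mem_iff_getElem?.1 (c1 x hx)
    · intro n m x y hx hy hnm
      obtain ⟨d, rfl⟩ : ∃ d, m = n + d + 1 := ⟨m - n - 1, by omega⟩
      exact c4 d n x y hx hy
  have hord : ∀ x y, G.proc x = G.proc y → pos x < pos y →
      Relation.TransGen (fun u w => ∃ γ, G.edge γ u w) x y := by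
    intro x y hp hlt
    obtain ⟨l, c1, c2, c3, c4⟩ := hidx (G.proc x)
    obtain ⟨n, hx⟩ := c1 x rfl
    obtain ⟨m, hy⟩ := c1 y hp.symm
    rcases lt_trichotomy n m with hnm | hnm | hnm
    · exact c4 n m x y hx hy hnm
    · subst hnm
      have := h.inj _ _ (Option.some.inj (hx.symm.trans hy))
      subst this
      omega
    · have := hpos _ _ (c4 m n y x hy hx hnm)
      omega
  have hn' : ∀ x, ¬ G.col x := fun x ⟨c, hc⟩ => hn c x hc
  have hspp : ∀ u v, G.edge none u v → G.proc u = G.proc v := by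
    intro u v he
    obtain ⟨a, b, p, h1, h2⟩ := hsp _ _ (h.edge_iff.2 he)
    rw [h.proc_of h1, h.proc_of h2]
  have hwrr : ∀ d u v, G.edge (some d) u v → G.proc u = A.Writer d ∧ G.proc v = A.Reader d := by
    intro d u v he
    obtain ⟨a, b, h1, h2⟩ := hwr _ _ _ (h.edge_iff.2 he)
    exact ⟨h.proc_of h1, h.proc_of h2⟩
  refine ⟨pos, fun u v e => hinj e, fun c u v hu => (hn _ _ hu).elim,
    fun c c' u hu => (hn _ _ hu).elim, fun γ u v he => hpos _ _ (.single ⟨γ, he⟩), hspp,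
    ?_, ?_, ?_, hwrr, ?_, ?_, ?_⟩
  · intro u v w he hw h1 h2
    obtain ⟨l, c1, c2, c3, c4⟩ := hidx (G.proc u)
    obtain ⟨n, hu, hv⟩ := (c3 u v rfl (hspp _ _ he).symm).1 he
    obtain ⟨m, hm⟩ := c1 w hw
    rcases lt_trichotomy n m with hnm | hnm | hnm
    · rcases lt_trichotomy m (n + 1) with hnm' | hnm' | hnm'
      · omega
      · subst hnm'
        have := h.inj _ _ (Option.some.inj (hm.symm.trans hv))
        subst this
        omega
      · have := hpos _ _ (c4 _ _ v w hv hm hnm')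
        omega
    · subst hnm
      have := h.inj _ _ (Option.some.inj (hm.symm.trans hu))
      subst this
      omega
    · have := hpos _ _ (c4 _ _ w u hm hu hnm)
      omega
  · intro v _
    obtain ⟨l, c1, c2, c3, c4⟩ := hidx (G.proc v)
    obtain ⟨n, hv⟩ := c1 v rfl
    cases n with
    | zero =>
      right
      intro w hw
      obtain ⟨m, hm⟩ := c1 w hw
      cases m with
      | zero =>
        have := h.inj _ _ (Option.some.inj (hm.symm.trans hv))
        rw [this]
      | succ m => exact (hpos _ _ (c4 _ _ v w hv hm (by omega))).le
    | succ n =>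
      left
      have hlen : n + 1 < l.length := (List.getElem?_eq_some_iff.1 hv).1
      obtain ⟨z, hz1, hz2⟩ := c2 n _ (List.getElem?_eq_getElem (by omega))
      have hz : l[n]? = some (enc z) := by
        rw [List.getElem?_eq_getElem (by omega), hz1]
      exact ⟨z, (c3 z v hz2 rfl).2 ⟨n, hz, hv⟩⟩
  · intro v _
    obtain ⟨l, c1, c2, c3, c4⟩ := hidx (G.proc v)
    obtain ⟨n, hv⟩ := c1 v rfl
    by_cases hlen : n + 1 < l.length
    · left
      obtain ⟨z, hz1, hz2⟩ := c2 (n + 1) _ (List.getElem?_eq_getElem hlen)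
      have hz : l[n + 1]? = some (enc z) := by
        rw [List.getElem?_eq_getElem hlen, hz1]
      exact ⟨z, (c3 v z rfl hz2).2 ⟨n, hv, hz⟩⟩
    · right
      intro w hw
      obtain ⟨m, hm⟩ := c1 w hw
      have hm' : m < l.length := (List.getElem?_eq_some_iff.1 hm).1
      rcases lt_or_eq_of_le (show m ≤ n by omega) with h1 | h1
      · exact (hpos _ _ (c4 _ _ w v hm hv h1)).le
      · subst h1
        have := h.inj _ _ (Option.some.inj (hm.symm.trans hv))
        rw [this]
  · intro d d' u v u' v' he he' hor
    by_contra hcon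
    have := hdisj d d' _ _ _ _ (h.edge_iff.2 he) (h.edge_iff.2 he') (by
      rintro ⟨h1, h2, h3⟩
      exact hcon ⟨h1, h.inj _ _ h2, h.inj _ _ h3⟩)
    obtain ⟨n1, n2, n3, n4⟩ := this
    rcases hor with rfl | rfl | rfl | rfl
    · exact n1 rfl
    · exact n2 rfl
    · exact n3 rfl
    · exact n4 rfl
  · intro d hd e₁ f₁ e₂ f₂ h1 h2 h3 h4
    obtain ⟨w1, w2⟩ := hwrr _ _ _ h1
    obtain ⟨w1', w2'⟩ := hwrr _ _ _ h2
    have ws := A.stack_wr d hd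
    have := hlifo d hd _ _ _ _ (h.edge_iff.2 h1) (h.edge_iff.2 h2)
      (h.trans (hord _ _ (w1.trans w1'.symm) h3))
      (h.trans (hord _ _ (by rw [w1', w2, ws]) h4))
    exact hpos _ _ (h.trans_iff.1 this)
  · intro d hd e₁ f₁ e₂ f₂ h1 h2 h3
    obtain ⟨w1, w2⟩ := hwrr _ _ _ h1
    obtain ⟨w1', w2'⟩ := hwrr _ _ _ h2
    have := hfifo d hd _ _ _ _ (h.edge_iff.2 h1) (h.edge_iff.2 h2)
      (h.trans (hord _ _ (w1.trans w1'.symm) h3))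
    exact hpos _ _ (h.trans_iff.1 this)

theorem cbm_of_good [Finite V] (h : Rep τ G enc) (hn : ∀ c x, ¬ G.ch c x) {pos : V → ℕ}
    (hg : G.Good pos) : IsCBMGraph A Alph τ.vertices τ.vlabel τ.edgeRel := by
  have hn' : ∀ x, ¬ G.col x := fun x ⟨c, hc⟩ => hn c x hc
  have hT : ∀ x y, Relation.TransGen (fun u w => ∃ γ, G.edge γ u w) x y → pos x < pos y := by
    intro x y ht
    induction ht with
    | single he =>
      obtain ⟨γ, he⟩ := he
      exact hg.edge_lt _ _ _ he
    | tail _ he ih =>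
      obtain ⟨γ, he⟩ := he
      exact ih.trans (hg.edge_lt _ _ _ he)
  have hord : ∀ n x y, pos y - pos x ≤ n → G.proc x = G.proc y → pos x < pos y →
      Relation.TransGen (fun u w => ∃ γ, G.edge γ u w) x y := by
    intro n
    induction n with
    | zero => intro x y h1 _ h2; omega
    | succ n ih =>
      intro x y h1 hp h2
      rcases hg.has_succ x (hn' x) with ⟨u, hu⟩ | hm
      · have a1 := hg.edge_lt _ _ _ hu
        have a2 := hg.succ_proc _ _ hu
        rcases lt_trichotomy (pos u) (pos y) with h3 | h3 | h3
        · exact .head ⟨none, hu⟩ (ih u y (by omega) (a2.symm.trans hp) h3)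
        · have := hg.inj _ _ h3
          subst this
          exact .single ⟨none, hu⟩
        · exact (hg.succ_cont x u y hu hp.symm h2 h3).elim
      · have := hm y hp.symm
        omega
  have hvert : ∀ x, enc x ∈ τ.vertices := by
    intro x
    obtain ⟨a, ha⟩ := h.lab x
    simp [vertices, ha]
  refine ⟨?_, ?_, ?_, ?_, ?_, ?_, ?_, ?_, ?_⟩
  · intro v hv
    exact Option.isSome_iff_exists.1 hv
  · intro γ u v he
    obtain ⟨x, y, rfl, rfl, he⟩ := (h.edge _ _ _).1 he
    exact ⟨hvert x, hvert y⟩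
  · intro p
    obtain ⟨l, hl1, hl2⟩ := ex_list pos hg.inj (fun x => G.proc x = p)
    have hmono : ∀ (n m : ℕ) x y, l[n]? = some x → l[m]? = some y → n < m → pos x < pos y := by
      intro n m x y hx hy hnm
      obtain ⟨h1, rfl⟩ := List.getElem?_eq_some_iff.1 hx
      obtain ⟨h2, rfl⟩ := List.getElem?_eq_some_iff.1 hy
      exact List.pairwise_iff_getElem.1 hl2 n m h1 h2 hnm
    have hmono' : ∀ (n m : ℕ) x y, l[n]? = some x → l[m]? = some y → pos x < pos y → n < m := by
      intro n m x y hx hy hnm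
      rcases lt_trichotomy n m with h1 | h1 | h1
      · exact h1
      · subst h1
        rw [hx] at hy
        rw [Option.some.inj hy] at hnm
        omega
      · have := hmono _ _ _ _ hy hx h1
        omega
    have hcons : ∀ x y, x ∈ l → y ∈ l →
        (G.edge none x y ↔ ∃ n : ℕ, l[n]? = some x ∧ l[n + 1]? = some y) := by
      intro x y hx hy
      have hxp := (hl1 x).1 hx
      have hyp := (hl1 y).1 hy
      constructor
      · intro he
        obtain ⟨n, hn⟩ := List.mem_iff_getElem?.1 hx
        obtain ⟨m, hm⟩ := List.mem_iff_getElem?.1 hy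
        have hnm := hmono' _ _ _ _ hn hm (hg.edge_lt _ _ _ he)
        have hml : m < l.length := (List.getElem?_eq_some_iff.1 hm).1
        by_cases h1 : m = n + 1
        · subst h1; exact ⟨n, hn, hm⟩
        · exfalso
          have hz : l[n + 1]? = some l[n + 1] := List.getElem?_eq_getElem (by omega)
          have hzp := (hl1 _).1 (List.mem_of_getElem? hz)
          exact hg.succ_cont x y _ he (hzp.trans hxp.symm) (hmono _ _ _ _ hn hz (by omega))
            (hmono _ _ _ _ hz hm (by omega))
      · rintro ⟨n, hn, hm⟩
        have hlt := hmono _ _ _ _ hn hm (by omega)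
        rcases hg.has_succ x (hn' x) with ⟨u, hu⟩ | hmx
        · have a1 := hg.edge_lt _ _ _ hu
          have a2 := hg.succ_proc _ _ hu
          rcases lt_trichotomy (pos u) (pos y) with h3 | h3 | h3
          · exfalso
            obtain ⟨m', hm'⟩ := List.mem_iff_getElem?.1 ((hl1 u).2 (a2.symm.trans hxp))
            have b1 := hmono' _ _ _ _ hn hm' a1
            have b2 := hmono' _ _ _ _ hm' hm h3
            omega
          · rw [← hg.inj _ _ h3]
            exact hu
          · exact (hg.succ_cont x u y hu (hyp.trans hxp.symm) hlt h3).elim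
        · have := hmx y (hyp.trans hxp.symm)
          omega
    refine ⟨l.map enc, ?_, ?_, ?_⟩
    · refine List.Nodup.map (fun x y e => h.inj x y e) ?_
      exact hl2.imp fun hab he => by rw [he] at hab; omega
    · intro v
      rw [List.mem_map]
      constructor
      · rintro ⟨x, hx, rfl⟩
        obtain ⟨a, ha⟩ := h.lab x
        rw [(hl1 x).1 hx] at ha
        exact ⟨hvert x, a, ha⟩
      · rintro ⟨h1, a, h2⟩
        obtain ⟨x, rfl⟩ := h.surj v h1
        exact ⟨x, (hl1 x).2 (h.proc_of h2), rfl⟩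
    · intro u v hu hv
      rw [List.mem_map] at hu hv
      obtain ⟨x, hx, rfl⟩ := hu
      obtain ⟨y, hy, rfl⟩ := hv
      rw [h.edge_iff, hcons x y hx hy]
      have hq : ∀ (n : ℕ) z, (l.map enc)[n]? = some (enc z) ↔ l[n]? = some z := by
        intro n z
        rw [List.getElem?_map, Option.map_eq_some_iff]
        constructor
        · rintro ⟨a, h1, h2⟩
          rw [h1, h.inj _ _ h2]
        · intro h1
          exact ⟨z, h1, rfl⟩
      simp only [hq]
  · intro u v he
    obtain ⟨x, y, rfl, rfl, he⟩ := (h.edge _ _ _).1 he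
    obtain ⟨a, ha⟩ := h.lab x
    obtain ⟨b, hb⟩ := h.lab y
    rw [← hg.succ_proc _ _ ‹_›] at hb
    exact ⟨a, b, _, ha, hb⟩
  · intro d u v he
    obtain ⟨x, y, rfl, rfl, hE⟩ := (h.edge _ _ _).1 he
    obtain ⟨a, ha⟩ := h.lab x
    obtain ⟨b, hb⟩ := h.lab y
    obtain ⟨w1, w2⟩ := hg.wr _ _ _ hE
    rw [w1] at ha
    rw [w2] at hb
    exact ⟨a, b, ha, hb⟩
  · intro d₁ d₂ u₁ v₁ u₂ v₂ he₁ he₂ hne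
    obtain ⟨x₁, y₁, rfl, rfl, hE₁⟩ := (h.edge _ _ _).1 he₁
    obtain ⟨x₂, y₂, rfl, rfl, hE₂⟩ := (h.edge _ _ _).1 he₂
    have key : ¬ (x₁ = x₂ ∨ x₁ = y₂ ∨ y₁ = x₂ ∨ y₁ = y₂) := by
      intro hor
      obtain ⟨h1, h2, h3⟩ := hg.disj _ _ _ _ _ _ hE₁ hE₂ hor
      exact hne ⟨h1, by rw [h2], by rw [h3]⟩
    exact ⟨fun e => key (Or.inl (h.inj _ _ e)), fun e => key (Or.inr (Or.inl (h.inj _ _ e))),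
      fun e => key (Or.inr (Or.inr (Or.inl (h.inj _ _ e)))),
      fun e => key (Or.inr (Or.inr (Or.inr (h.inj _ _ e))))⟩
  · intro v hv
    obtain ⟨x, y, rfl, h2, h3⟩ := h.trans_inv hv
    have := hT _ _ h3
    rw [h.inj _ _ h2] at this
    omega
  · intro d hd e₁ f₁ e₂ f₂ he₁ he₂ h1 h2
    obtain ⟨x₁, y₁, rfl, rfl, hE₁⟩ := (h.edge _ _ _).1 he₁
    obtain ⟨x₂, y₂, rfl, rfl, hE₂⟩ := (h.edge _ _ _).1 he₂
    rw [h.trans_iff] at h1 h2 ⊢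
    have w1 := (hg.wr _ _ _ hE₁).2
    have w2 := (hg.wr _ _ _ hE₂).2
    exact hord _ _ _ le_rfl (w2.trans w1.symm)
      (hg.lifo d hd _ _ _ _ hE₁ hE₂ (hT _ _ h1) (hT _ _ h2))
  · intro d hd e₁ f₁ e₂ f₂ he₁ he₂ h1
    obtain ⟨x₁, y₁, rfl, rfl, hE₁⟩ := (h.edge _ _ _).1 he₁
    obtain ⟨x₂, y₂, rfl, rfl, hE₂⟩ := (h.edge _ _ _).1 he₂
    rw [h.trans_iff] at h1 ⊢
    have w1 := (hg.wr _ _ _ hE₁).2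
    have w2 := (hg.wr _ _ _ hE₂).2
    exact hord _ _ _ le_rfl (w1.trans w2.symm) (hg.fifo d hd _ _ _ _ hE₁ hE₂ (hT _ _ h1))

theorem exists_atom_proc : ∀ _τ : STT (Alph × A.Procs) (Option A.DS), Nonempty A.Procs
  | .atom _ a => ⟨a.2⟩
  | .add _ _ _ τ => exists_atom_proc τ
  | .forget _ τ => exists_atom_proc τ
  | .plus τ _ => exists_atom_proc τ

end STT

/-- There is a constant `c` such that for every architecture,
finite alphabet, and `k ≥ 1`, there is a nondeterministic bottom-up tree
automaton with at most `2^(c·k²·(|Procs|+|DS|))` states accepting a binary tree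
over `Λ^k` iff it is a valid `k`-STT with empty coloring domain whose graph
`G_τ` is a CBM over `(A, Alph)`. -/
theorem cbm_stt_automaton :
    ∃ c : ℕ, ∀ (A : Architecture) (Alph : Type), Fintype Alph → ∀ k : ℕ, 1 ≤ k →
      ∃ Aut : BUTA (STTLabel (Alph × A.Procs) (Option A.DS)),
        Aut.card ≤ 2 ^ (c * k ^ 2 * (Fintype.card A.Procs + Fintype.card A.DS)) ∧
        ∀ t : BTree (STTLabel (Alph × A.Procs) (Option A.DS)),
          (Aut.Accepts t ↔ ∃ τ : STT (Alph × A.Procs) (Option A.DS),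
            τ.Valid k ∧ t = τ.toTree ∧ (∀ i, τ.chi i = none) ∧
            IsCBMGraph A Alph τ.vertices τ.vlabel τ.edgeRel) := by
  refine ⟨20, ?_⟩
  intro A Alph _ k hk
  by_cases hP : Nonempty A.Procs
  · refine ⟨theAut A Alph k, ?_, ?_⟩
    · have h1 := CSt.card_le (A := A) k hk (Fintype.card_pos_iff.2 hP)
      have e : (theAut A Alph k).card = Nat.card (CSt A (Fin (k+1))) :=
        (@Nat.card_eq_fintype_card _ (theAut A Alph k).stFintype).symm
      rw [e]
      exact h1
    · intro t
      constructor
      · rintro ⟨s, hr, hacc⟩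
        obtain ⟨τ, ht, hv, pos, hg, rfl⟩ := runs_fwd hr
        have hrep := τ.rep k hv
        have hn : ∀ c x, ¬ (τ.cg k).ch c x := fun c x hx => hacc c _ ⟨x, hx, rfl⟩
        have := τ.VT_fin
        refine ⟨τ, hv, ht, ?_, STT.cbm_of_good hrep hn hg⟩
        intro i
        by_contra hcon
        obtain ⟨u, hu⟩ := Option.ne_none_iff_exists'.1 hcon
        obtain ⟨hi, x, rfl⟩ := hrep.chi _ _ hu
        exact hn ⟨i, by omega⟩ x ((hrep.ch _ _).2 hu)
      · rintro ⟨τ, hv, rfl, hchi, hc⟩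
        have hrep := τ.rep k hv
        have hn : ∀ c x, ¬ (τ.cg k).ch c x := by
          intro c x hx
          rw [hrep.ch, hchi] at hx
          cases hx
        have := τ.VT_fin
        obtain ⟨pos, hg⟩ := STT.good_of_cbm hrep hn hc
        refine ⟨_, runs_bwd τ hv pos hg, ?_⟩
        rintro c p ⟨x, hx, -⟩
        exact hn c x hx
  · refine ⟨⟨Empty, inferInstance, fun _ _ => False, fun _ _ _ => False,
      fun _ _ _ _ => False, fun _ => False⟩, ?_, ?_⟩
    · simp [BUTA.card]
    · intro t
      constructor
      · rintro ⟨s, -⟩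
        exact s.elim
      · rintro ⟨τ, -⟩
        exact (hP τ.exists_atom_proc).elim
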